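/- Let A be a commutative noetherian ring and let B be a nonzero, flat, formally smooth A-algebra which is essentially of finite type over A, and assume Spec(B) is connected. Then there exist an invertible B-module M̄ and an integer n ≥ 0 such that for every B ⊗_A B-module X and every integer i there is an isomorphism of B-modules, natural in X: Ext^i_{B ⊗_A B}(B, X) ≅ M̄ ⊗_B Tor^{B ⊗_A B}_{n−i}(B, X), where Tor in negative homological degrees is interpreted as zero. -/

import Mathlib

universe u

open CategoryTheory CategoryTheory.MonoidalCategory

/-- An `R`-module `L` is *invertible* if there is an `R`-module `L'` with `L ⊗[R] L' ≅ R`. -/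
def Module.IsInvertible (R : Type u) [CommRing R] (L : Type u) [AddCommGroup L] [Module R L] :
    Prop :=
  ∃ (L' : Type u) (_ : AddCommGroup L') (_ : Module R L'),
    Nonempty ((TensorProduct R L L') ≃ₗ[R] R)

open TensorProduct in
/-- The Hochschild cohomology functor `Ext^i_{B ⊗[A] B}(B, -)` (with `B` a module over the
enveloping ring `B ⊗[A] B` via the multiplication map), viewed as a functor from
`B ⊗[A] B`-modules to `B`-modules (through restriction of scalars along
`B → B ⊗[A] B`, `b ↦ b ⊗ 1`), with the convention that it is the zero functor in negative
degrees. -/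
noncomputable def extEnvelopingFunctor (A B : Type u) [CommRing A] [CommRing B] [Algebra A B]
    (i : ℤ) : ModuleCat.{u} (B ⊗[A] B) ⥤ ModuleCat.{u} B :=
  letI := ((Algebra.TensorProduct.lmul' A (S := B)).toRingHom).toModule
  if 0 ≤ i then
    ((Ext (B ⊗[A] B) (ModuleCat.{u} (B ⊗[A] B)) i.toNat).obj
        (Opposite.op (ModuleCat.of (B ⊗[A] B) B))) ⋙
      ModuleCat.restrictScalars (algebraMap B (B ⊗[A] B))
  else (Functor.const _).obj (ModuleCat.of B PUnit)

open TensorProduct in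
/-- The Hochschild homology functor `Tor^{B ⊗[A] B}_j(B, -)` (with `B` a module over the
enveloping ring `B ⊗[A] B` via the multiplication map), viewed as a functor from
`B ⊗[A] B`-modules to `B`-modules (through restriction of scalars along
`B → B ⊗[A] B`, `b ↦ b ⊗ 1`), with the convention that it is the zero functor in negative
degrees. -/
noncomputable def torEnvelopingFunctor (A B : Type u) [CommRing A] [CommRing B] [Algebra A B]
    (j : ℤ) : ModuleCat.{u} (B ⊗[A] B) ⥤ ModuleCat.{u} B :=
  letI := ((Algebra.TensorProduct.lmul' A (S := B)).toRingHom).toModule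
  if 0 ≤ j then
    ((Tor (ModuleCat.{u} (B ⊗[A] B)) j.toNat).obj (ModuleCat.of (B ⊗[A] B) B)) ⋙
      ModuleCat.restrictScalars (algebraMap B (B ⊗[A] B))
  else (Functor.const _).obj (ModuleCat.of B PUnit)


section Bridge
open Opposite

/-- Chain-level functoriality in the second variable. -/
noncomputable def vdbYonMap {R : Type u} [CommRing R] (P : ChainComplex (ModuleCat.{u} R) ℕ)
    {X Y : ModuleCat.{u} R} (f : X ⟶ Y) : P.linearYonedaObj R X ⟶ P.linearYonedaObj R Y :=
  (HomologicalComplex.unopFunctor (V := ModuleCat.{u} R) (ComplexShape.down ℕ)).map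
    ((NatTrans.mapHomologicalComplex (NatTrans.rightOp ((linearYoneda R (ModuleCat.{u} R)).map f)) _).app P).op

lemma vdb_sq_inv {C : Type*} [Category* C] {K K' L L' : C} (a : K ≅ K') (b : L ≅ L') (f : L' ⟶ K')
    (g : L ⟶ K) (h : b.hom ≫ f = g ≫ a.hom) : f ≫ a.inv = b.inv ≫ g := by
  rw [Iso.eq_inv_comp, ← Category.assoc, Iso.comp_inv_eq, h]

lemma vdb_sq_unop {C : Type*} [Category* C] {F F' G G' : Cᵒᵖ} {K L : C} (e : F ≅ F') (e' : G ≅ G')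
    (h : F' ⟶ G') (a : K ≅ unop F') (b : L ≅ unop G') (g : L ⟶ K)
    (H : h.unop ≫ a.inv = b.inv ≫ g) :
    (e.hom ≫ h ≫ e'.inv).unop ≫ (e.unop.symm ≪≫ a.symm).hom =
      (e'.unop.symm ≪≫ b.symm).hom ≫ g := by
  simp only [unop_comp, Iso.trans_hom, Iso.symm_hom, Iso.unop_inv, Category.assoc]
  rw [← H, ← Iso.unop_hom, ← Iso.unop_inv, Iso.unop_hom, Iso.unop_inv]
  have := congrArg Quiver.Hom.unop e.inv_hom_id
  rw [unop_comp] at this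
  rw [reassoc_of% this]
  simp

lemma vdb_homologyUnop_nat {R : Type u} [CommRing R] 
    {K L : HomologicalComplex (ModuleCat.{u} R)ᵒᵖ (ComplexShape.down ℕ)} (φ : K ⟶ L) (n : ℕ) :
    (HomologicalComplex.homologyMap φ n).unop ≫ (HomologicalComplex.homologyUnop K n).inv =
    (HomologicalComplex.homologyUnop L n).inv ≫ HomologicalComplex.homologyMap 
      ((HomologicalComplex.unopFunctor (V := ModuleCat.{u} R) (ComplexShape.down ℕ)).map φ.op) n := 
  vdb_sq_inv _ _ _ _ (congrArg Quiver.Hom.unop (HomologicalComplex.homologyOp_hom_naturality 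
    ((HomologicalComplex.unopFunctor (V := ModuleCat.{u} R) (ComplexShape.down ℕ)).map φ.op) n))

lemma vdb_isoExt_nat {R : Type u} [CommRing R] {N : ModuleCat.{u} R} (P : ProjectiveResolution N)
    (n : ℕ) {X Y : ModuleCat.{u} R} (f : X ⟶ Y) :
    ((Ext R (ModuleCat.{u} R) n).obj (op N)).map f ≫ (P.isoExt n Y).hom =
      (P.isoExt (R := R) n X).hom ≫ HomologicalComplex.homologyMap (vdbYonMap P.complex f) n := by
  have h := P.leftDerived_app_eq (NatTrans.rightOp ((linearYoneda R (ModuleCat.{u} R)).map f)) n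
  have h2 : ((Ext R (ModuleCat.{u} R) n).obj (op N)).map f = _ := congrArg Quiver.Hom.unop h
  have h3 := vdb_homologyUnop_nat ((NatTrans.mapHomologicalComplex (NatTrans.rightOp ((linearYoneda R (ModuleCat.{u} R)).map f)) _).app P.complex) n
  refine (congrArg (· ≫ (P.isoExt n Y).hom) h2).trans ?_
  exact vdb_sq_unop _ _ _ _ _ _ h3
open Abelian

/-- `Ext` as a functor in the second variable, through the derived-category `Ext`. -/
noncomputable def extFun {R : Type u} [CommRing R] (N : ModuleCat.{u} R) (n : ℕ) :
    ModuleCat.{u} R ⥤ ModuleCat.{u} R where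
  obj X := ModuleCat.of R (Ext.{u} N X n)
  map {X Y} f := ModuleCat.ofHom ((Ext.mk₀ f).postcompOfLinear R N (add_zero n))
  map_id X := by ext; simp
  map_comp f g := by ext x; simp [← Ext.mk₀_comp_mk₀]

section
variable {R : Type u} [CommRing R] {N : ModuleCat.{u} R} (P : ProjectiveResolution N) (n : ℕ)


/-- Underlying cochain of a cycle. -/
noncomputable def vdbI (X : ModuleCat.{u} R) :
    ((P.complex.linearYonedaObj R X).cycles n) →ₗ[R] (P.complex.X n ⟶ X) :=
  ((P.complex.linearYonedaObj R X).iCycles n).hom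

lemma vdbI_inj (X : ModuleCat.{u} R) : Function.Injective (vdbI P n X) :=
  (ModuleCat.mono_iff_injective ((P.complex.linearYonedaObj R X).iCycles n)).1 inferInstance

lemma vdb_cyc (X : ModuleCat.{u} R) (z : ((P.complex.linearYonedaObj R X).cycles n)) :
    P.complex.d (n+1) n ≫ vdbI P n X z = 0 := by
  have := (P.complex.linearYonedaObj R X).iCycles_d n (n+1)
  exact LinearMap.congr_fun (congrArg ModuleCat.Hom.hom this) z

lemma vdb_cyc_surj (X : ModuleCat.{u} R) (f : P.complex.X n ⟶ X)
    (hf : P.complex.d (n+1) n ≫ f = 0) : ∃ z, vdbI P n X z = f := by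
  let K := (P.complex.linearYonedaObj R X)
  let S := ShortComplex.mk _ _ (K.iCycles_d n (n+1))
  have hS : S.Exact := ShortComplex.exact_of_f_is_kernel S (K.cyclesIsKernel n (n+1) (by simp))
  exact (ShortComplex.moduleCat_exact_iff S).1 hS f hf

lemma vdb_cyc_ker (X : ModuleCat.{u} R) (z) (p : ℕ) (hp : (ComplexShape.up ℕ).prev n = p) :
    (P.complex.linearYonedaObj R X).homologyπ n z = 0 ↔
     ∃ g : P.complex.X p ⟶ X, P.complex.d n p ≫ g = vdbI P n X z := by
  let K := (P.complex.linearYonedaObj R X)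
  let S := ShortComplex.mk _ _ (K.toCycles_comp_homologyπ p n)
  have hS : S.Exact := ShortComplex.exact_of_g_is_cokernel S (K.homologyIsCokernel p n hp)
  have h1 : ∀ g : P.complex.X p ⟶ X, vdbI P n X (K.toCycles p n g) = P.complex.d n p ≫ g := by
    intro g
    exact LinearMap.congr_fun (congrArg ModuleCat.Hom.hom (K.toCycles_i p n)) g
  constructor
  · intro h
    obtain ⟨y, hy⟩ := (ShortComplex.moduleCat_exact_iff S).1 hS z h
    exact ⟨y, (h1 y).symm.trans (congrArg (vdbI P n X) hy)⟩
  · rintro ⟨g, hg⟩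
    rw [← h1] at hg
    rw [← vdbI_inj P n X hg]
    exact S.moduleCat_zero_apply g

noncomputable def vdbCycMap (X : ModuleCat.{u} R) :
    ((P.complex.linearYonedaObj R X).cycles n) →ₗ[R] Ext.{u} N X n where
  toFun z := P.extMk (vdbI P n X z) (n+1) rfl (vdb_cyc P n X z)
  map_add' x y := by
    rw [P.add_extMk]; congr 1; simp
  map_smul' r x := by
    rw [RingHom.id_apply, Ext.smul_eq_comp_mk₀, P.extMk_comp_mk₀]
    congr 1
    rw [Linear.comp_smul, Category.comp_id, map_smul]

lemma vdbCycMap_surj (X : ModuleCat.{u} R) : Function.Surjective (vdbCycMap P n X) := by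
  intro α
  obtain ⟨f, hf, rfl⟩ := P.extMk_surjective α (n+1) rfl
  obtain ⟨z, rfl⟩ := vdb_cyc_surj P n X f hf
  exact ⟨z, rfl⟩

lemma vdb_extMk_zero (X : ModuleCat.{u} R) (f : P.complex.X 0 ⟶ X)
    (hf : P.complex.d 1 0 ≫ f = 0) : P.extMk f 1 rfl hf = 0 ↔ f = 0 := by
  constructor
  · intro h
    rw [← P.extEquivCohomologyClass.apply_eq_iff_eq,
      ProjectiveResolution.extEquivCohomologyClass_extMk, 
      ProjectiveResolution.extEquivCohomologyClass_zero, 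
      CochainComplex.HomComplex.CohomologyClass.mk_eq_zero_iff,
      CochainComplex.HomComplex.Cocycle.toSingleMk_mem_coboundaries_iff _ _ _ _ _ 1 (by lia)] at h
    obtain ⟨g, hg⟩ := h
    have h0 : P.cochainComplex.d (-(0:ℕ)) 1 = 0 := by
      apply Limits.IsZero.eq_of_tgt
      exact P.cochainComplex.isZero_of_isStrictlyLE 0 1 (by lia)
    rw [h0, Limits.zero_comp] at hg
    rw [← cancel_epi (P.cochainComplexXIso (-(0:ℕ)) 0 rfl).hom, ← hg, Limits.comp_zero]
  · rintro rfl; simp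

lemma vdbCycMap_ker (X : ModuleCat.{u} R) (z) : vdbCycMap P n X z = 0 ↔ 
    (P.complex.linearYonedaObj R X).homologyπ n z = 0 := by
  change P.extMk _ _ rfl (vdb_cyc P n X z) = 0 ↔ _
  cases n with
  | zero => 
    rw [vdb_extMk_zero, vdb_cyc_ker P 0 X z 0 (by simp)]
    constructor
    · intro h; exact ⟨0, by rw [h]; simp⟩
    · rintro ⟨g, hg⟩; rw [← hg, P.complex.shape _ _ (by simp)]; simp
  | succ p => rw [vdb_cyc_ker P (p+1) X z p (by simp), P.extMk_eq_zero_iff _ _ _ _ p rfl]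

lemma vdbKerEq (X : ModuleCat.{u} R) :
    LinearMap.ker ((P.complex.linearYonedaObj R X).homologyπ n).hom =
      LinearMap.ker (vdbCycMap P n X) := by
  ext z; rw [LinearMap.mem_ker, LinearMap.mem_ker]; exact (vdbCycMap_ker P n X z).symm

noncomputable def vdbHomIso (X : ModuleCat.{u} R) :
    (P.complex.linearYonedaObj R X).homology n ≅ (extFun N n).obj X :=
  LinearEquiv.toModuleIso
   (((LinearMap.quotKerEquivOfSurjective ((P.complex.linearYonedaObj R X).homologyπ n).hom
     ((ModuleCat.epi_iff_surjective _).1 inferInstance)).symm ≪≫ₗ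
    Submodule.quotEquivOfEq _ _ (vdbKerEq P n X)) ≪≫ₗ
    (LinearMap.quotKerEquivOfSurjective (vdbCycMap P n X) (vdbCycMap_surj P n X)))

lemma vdbHomIso_π (X : ModuleCat.{u} R) (z) :
    (vdbHomIso P n X).hom ((P.complex.linearYonedaObj R X).homologyπ n z) = vdbCycMap P n X z := by
  have h : ((LinearMap.quotKerEquivOfSurjective ((P.complex.linearYonedaObj R X).homologyπ n).hom
     ((ModuleCat.epi_iff_surjective _).1 inferInstance)).symm ((P.complex.linearYonedaObj R X).homologyπ n z)) = 
     Submodule.Quotient.mk z := by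
    rw [LinearEquiv.symm_apply_eq]; rfl
  change (LinearMap.quotKerEquivOfSurjective (vdbCycMap P n X) (vdbCycMap_surj P n X))
    (Submodule.quotEquivOfEq _ _ (vdbKerEq P n X) (LinearEquiv.symm _ _)) = _
  exact congrArg (fun w => (LinearMap.quotKerEquivOfSurjective (vdbCycMap P n X) (vdbCycMap_surj P n X))
    (Submodule.quotEquivOfEq _ _ (vdbKerEq P n X) w)) h

lemma vdbHomIso_nat {X Y : ModuleCat.{u} R} (f : X ⟶ Y) :
    HomologicalComplex.homologyMap (vdbYonMap P.complex f) n ≫ (vdbHomIso P n Y).hom = 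
    (vdbHomIso P n X).hom ≫ (extFun N n).map f := by
  rw [← cancel_epi (HomologicalComplex.homologyπ _ n), HomologicalComplex.homologyπ_naturality_assoc]
  ext z
  change (vdbHomIso P n Y).hom ((P.complex.linearYonedaObj R Y).homologyπ n _) = 
    (extFun N n).map f ((vdbHomIso P n X).hom ((P.complex.linearYonedaObj R X).homologyπ n z))
  rw [vdbHomIso_π, vdbHomIso_π]
  change P.extMk _ _ rfl (vdb_cyc P n Y _) = (P.extMk _ _ rfl (vdb_cyc P n X z)).comp _ (add_zero n)
  rw [P.extMk_comp_mk₀]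
  congr 1
  have := HomologicalComplex.cyclesMap_i (vdbYonMap P.complex f) n
  exact LinearMap.congr_fun (congrArg ModuleCat.Hom.hom this) z
end

noncomputable def vdbExtIso {R : Type u} [CommRing R] (N : ModuleCat.{u} R) (n : ℕ) :
    (Ext R (ModuleCat.{u} R) n).obj (op N) ≅ extFun N n :=
  NatIso.ofComponents (fun X => (projectiveResolution N).isoExt n X ≪≫ vdbHomIso _ n X) (by
    intro X Y f
    simp only [Iso.trans_hom, Category.assoc]
    rw [← vdbHomIso_nat, ← Category.assoc, vdb_isoExt_nat, Category.assoc])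
end Bridge

set_option linter.unusedSectionVars false

section Splice
open Limits

variable {C : Type*} [Category* C] [Abelian C]

/-- the augmentation in degree zero. -/
noncomputable def vdbEps {Z : C} (Q : ProjectiveResolution Z) : Q.complex.X 0 ⟶ Z := Q.π.f 0

lemma vdbEps_zero {Z : C} (Q : ProjectiveResolution Z) : Q.complex.d 1 0 ≫ vdbEps Q = 0 :=
  Q.complex_d_comp_π_f_zero

noncomputable def vdbEpsCok {Z : C} (Q : ProjectiveResolution Z) :
    IsColimit (CokernelCofork.ofπ _ (vdbEps_zero Q)) := Q.isColimitCokernelCofork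

lemma vdbEps_epi {Z : C} (Q : ProjectiveResolution Z) : Epi (vdbEps Q) :=
  epi_of_isColimit_cofork (vdbEpsCok Q)

lemma vdbEps_exact {Z : C} (Q : ProjectiveResolution Z) :
    (ShortComplex.mk _ _ (vdbEps_zero Q)).Exact :=
  ShortComplex.exact_of_g_is_cokernel _ (vdbEpsCok Q)

noncomputable abbrev vdbAug {S : ShortComplex C} (Q : ProjectiveResolution S.X₁) :
    ChainComplex C ℕ :=
  Q.complex.augment (vdbEps Q ≫ S.f) (by rw [← Category.assoc, vdbEps_zero, zero_comp])

lemma vdbAug_exact {S : ShortComplex C} (hS : S.ShortExact) (Q : ProjectiveResolution S.X₁) (n : ℕ) :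
    (vdbAug Q).ExactAt (n+1) := by
  rw [HomologicalComplex.exactAt_iff' _ (n + 1 + 1) (n + 1) n (by simp) (by simp)]
  cases n with
  | zero =>
    have h := vdbEps_exact Q
    have := hS.mono_f
    let φ : ShortComplex.mk _ _ (vdbEps_zero Q) ⟶ (vdbAug Q).sc' 2 1 0 :=
      { τ₁ := 𝟙 _, τ₂ := 𝟙 _, τ₃ := S.f, 
        comm₁₂ := by exact (Category.id_comp _).trans (Category.comp_id _).symm, 
        comm₂₃ := by exact Category.id_comp _ }
    have : Epi φ.τ₁ := by change Epi (𝟙 _); infer_instance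
    have : IsIso φ.τ₂ := by change IsIso (𝟙 _); infer_instance
    have : Mono φ.τ₃ := hS.mono_f
    exact (ShortComplex.exact_iff_of_epi_of_isIso_of_mono φ).1 h
  | succ m => exact Q.exact_succ m

noncomputable def vdbSplice {S : ShortComplex C} (hS : S.ShortExact) [Projective S.X₂]
    (Q : ProjectiveResolution S.X₁) : ProjectiveResolution S.X₃ where
  complex := vdbAug Q
  projective n := by
    cases n with
    | zero => change Projective S.X₂; infer_instance
    | succ m => exact Q.projective m
  π := (ChainComplex.toSingle₀Equiv _ _).symm ⟨S.g, by 
    change (vdbEps Q ≫ S.f) ≫ S.g = 0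
    rw [Category.assoc, S.zero, comp_zero]⟩
  quasiIso := ⟨fun n => by
    cases n with
    | zero =>
      rw [ChainComplex.quasiIsoAt₀_iff, ShortComplex.quasiIso_iff_of_zeros' _ rfl rfl rfl]
      have := hS.epi_g
      have := vdbEps_epi Q
      let T := ShortComplex.mk (vdbEps Q ≫ S.f) S.g (by rw [Category.assoc, S.zero, comp_zero])
      have hT : T.Exact := by
          let φ : T ⟶ S := { τ₁ := vdbEps Q, τ₂ := 𝟙 _, τ₃ := 𝟙 _ }
          have : Epi φ.τ₁ := by assumption
          exact (ShortComplex.exact_iff_of_epi_of_isIso_of_mono φ).2 hS.exact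
      refine (ShortComplex.exact_and_epi_g_iff_of_iso ?_).2 ⟨hT, hS.epi_g⟩
      refine (ShortComplex.isoMk (Iso.refl _) (Iso.refl _) (Iso.refl _) ?_ ?_) 
      · exact (Category.id_comp _).trans (Category.comp_id _).symm
      · refine (Category.id_comp _).trans ?_
        refine Eq.trans ?_ (Category.comp_id _).symm
        exact (ChainComplex.toSingle₀Equiv_symm_apply_f_zero (C := vdbAug Q) (X := S.X₃) S.g _).symm
    | succ m =>
      rw [quasiIsoAt_iff_exactAt']
      · exact vdbAug_exact hS Q m
      · apply ChainComplex.exactAt_succ_single_obj⟩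

lemma vdbSplice_π {S : ShortComplex C} (hS : S.ShortExact) [Projective S.X₂]
    (Q : ProjectiveResolution S.X₁) : (vdbSplice hS Q).π.f 0 = S.g :=
  (ChainComplex.toSingle₀Equiv_symm_apply_f_zero (C := vdbAug Q) (X := S.X₃) S.g _)

/-- functoriality of the splice -/
noncomputable def vdbSpliceMap {S S' : ShortComplex C} (hS : S.ShortExact) [Projective S.X₂]
    (hS' : S'.ShortExact) [Projective S'.X₂]
    (Q : ProjectiveResolution S.X₁) (Q' : ProjectiveResolution S'.X₁) (φ : S ⟶ S') 
    (ψ : Q.complex ⟶ Q'.complex) (h : ψ.f 0 ≫ vdbEps Q' = vdbEps Q ≫ φ.τ₁) :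
    (vdbSplice hS Q).complex ⟶ (vdbSplice hS' Q').complex where
  f n := match n with
    | 0 => φ.τ₂
    | n+1 => ψ.f n
  comm' i j hij := by
    obtain rfl : j + 1 = i := hij
    cases j with
    | zero =>
      change ψ.f 0 ≫ (vdbEps Q' ≫ S'.f) = (vdbEps Q ≫ S.f) ≫ φ.τ₂
      rw [reassoc_of% h, Category.assoc, φ.comm₁₂]
    | succ m => exact ψ.comm (m+1) m

variable {D : Type*} [Category* D] [Abelian D] [HasProjectiveResolutions C]
  (H : C ⥤ D) [H.Additive]

/-- middle iso for the shift -/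
noncomputable def vdbMid {S : ShortComplex C} (hS : S.ShortExact) [Projective S.X₂]
    (Q : ProjectiveResolution S.X₁) (j : ℕ) :
    (HomologicalComplex.homologyFunctor D _ (j+2)).obj
      ((H.mapHomologicalComplex _).obj (vdbSplice hS Q).complex) ≅
    (HomologicalComplex.homologyFunctor D _ (j+1)).obj
      ((H.mapHomologicalComplex _).obj Q.complex) :=
  ((HomologicalComplex.homologyFunctorIso' D (ComplexShape.down ℕ) (j+3) (j+2) (j+1) (by simp) (by simp)).app
    ((H.mapHomologicalComplex _).obj (vdbSplice hS Q).complex)).trans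
   ((HomologicalComplex.homologyFunctorIso' D (ComplexShape.down ℕ) (j+2) (j+1) j (by simp) (by simp)).symm.app
    ((H.mapHomologicalComplex _).obj Q.complex))

lemma vdb_glue {E : Type*} [Category* E] {X X' Y Y' Z Z' : E} {a : X ⟶ Y} {b : Y ⟶ Z}
  {a' : X' ⟶ Y'} {b' : Y' ⟶ Z'} {f : X ⟶ X'} {g : Y ⟶ Y'} {h : Z ⟶ Z'} 
  (h1 : f ≫ a' = a ≫ g) (h2 : g ≫ b' = b ≫ h) : f ≫ (a' ≫ b') = (a ≫ b) ≫ h := by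
  rw [reassoc_of% h1, h2, Category.assoc]

lemma vdbMid_nat {S S' : ShortComplex C} (hS : S.ShortExact) [Projective S.X₂]
    (hS' : S'.ShortExact) [Projective S'.X₂]
    (Q : ProjectiveResolution S.X₁) (Q' : ProjectiveResolution S'.X₁) (φ : S ⟶ S') 
    (ψ : Q.complex ⟶ Q'.complex) (h : ψ.f 0 ≫ vdbEps Q' = vdbEps Q ≫ φ.τ₁) (j : ℕ) :
    (H.mapHomologicalComplex _ ⋙ HomologicalComplex.homologyFunctor D _ (j+2)).map (vdbSpliceMap hS hS' Q Q' φ ψ h) ≫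
      (vdbMid H hS' Q' j).hom = (vdbMid H hS Q j).hom ≫ 
      (H.mapHomologicalComplex _ ⋙ HomologicalComplex.homologyFunctor D _ (j+1)).map ψ :=
  vdb_glue ((HomologicalComplex.homologyFunctorIso' D (ComplexShape.down ℕ) (j+3) (j+2) (j+1) (by simp) (by simp)).hom.naturality
    ((H.mapHomologicalComplex _).map (vdbSpliceMap hS hS' Q Q' φ ψ h)))
    ((HomologicalComplex.homologyFunctorIso' D (ComplexShape.down ℕ) (j+2) (j+1) j (by simp) (by simp)).inv.naturality
    ((H.mapHomologicalComplex _).map ψ))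

/-- higher shift -/
noncomputable def vdbShift {S : ShortComplex C} (hS : S.ShortExact) [Projective S.X₂] (j : ℕ) :
    (H.leftDerived (j+2)).obj S.X₃ ≅ (H.leftDerived (j+1)).obj S.X₁ :=
  (vdbSplice hS (projectiveResolution S.X₁)).isoLeftDerivedObj H (j+2) ≪≫
   vdbMid H hS (projectiveResolution S.X₁) j ≪≫
   ((projectiveResolution S.X₁).isoLeftDerivedObj H (j+1)).symm

lemma vdbShift_nat {S S' : ShortComplex C} (hS : S.ShortExact) [Projective S.X₂]
    (hS' : S'.ShortExact) [Projective S'.X₂] (φ : S ⟶ S') (j : ℕ) :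
    (H.leftDerived (j+2)).map φ.τ₃ ≫ (vdbShift H hS' j).hom =
      (vdbShift H hS j).hom ≫ (H.leftDerived (j+1)).map φ.τ₁ := by
  let Q := projectiveResolution S.X₁
  let Q' := projectiveResolution S'.X₁
  let ψ := ProjectiveResolution.lift φ.τ₁ Q Q'
  have h : ψ.f 0 ≫ vdbEps Q' = vdbEps Q ≫ φ.τ₁ := ProjectiveResolution.lift_commutes_zero _ _ _
  have h1 := ProjectiveResolution.isoLeftDerivedObj_hom_naturality φ.τ₃ (vdbSplice hS Q)
    (vdbSplice hS' Q') (vdbSpliceMap hS hS' Q Q' φ ψ h) 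
    (by rw [vdbSplice_π, vdbSplice_π]; exact φ.comm₂₃) H (j+2)
  have h2 := ProjectiveResolution.isoLeftDerivedObj_inv_naturality φ.τ₁ Q Q' ψ h H (j+1)
  exact vdb_glue h1 (vdb_glue (vdbMid_nat H hS hS' Q Q' φ ψ h j) h2.symm)

lemma vdbHEps {Z : C} (Q : ProjectiveResolution Z) :
    H.map (Q.complex.d 1 0) ≫ H.map (vdbEps Q) = 0 := by
  rw [← H.map_comp, vdbEps_zero, H.map_zero]

/-- comparison from opcycles -/
noncomputable def vdbOpc {S : ShortComplex C} (hS : S.ShortExact) [Projective S.X₂]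
    (Q : ProjectiveResolution S.X₁) :
    ((H.mapHomologicalComplex _).obj (vdbSplice hS Q).complex).opcycles 1 ⟶ H.obj S.X₁ :=
  HomologicalComplex.descOpcycles _ (H.map (vdbEps Q)) 2 (by simp) (vdbHEps H Q)

/-- low degree connecting map -/
noncomputable def vdbDel0 {S : ShortComplex C} (hS : S.ShortExact) [Projective S.X₂]
    (Q : ProjectiveResolution S.X₁) :
    (HomologicalComplex.homologyFunctor D _ 1).obj
      ((H.mapHomologicalComplex _).obj (vdbSplice hS Q).complex) ⟶ H.obj S.X₁ :=
  ((H.mapHomologicalComplex _).obj (vdbSplice hS Q).complex).homologyι 1 ≫ vdbOpc H hS Q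

/-- the projection to opcycles, retyped -/
noncomputable def vdbPopc {S : ShortComplex C} (hS : S.ShortExact) [Projective S.X₂]
    (Q : ProjectiveResolution S.X₁) : H.obj (Q.complex.X 0) ⟶ 
    ((H.mapHomologicalComplex _).obj (vdbSplice hS Q).complex).opcycles 1 :=
  HomologicalComplex.pOpcycles ((H.mapHomologicalComplex _).obj (vdbSplice hS Q).complex) 1

lemma vdbPopc_epi {S : ShortComplex C} (hS : S.ShortExact) [Projective S.X₂]
    (Q : ProjectiveResolution S.X₁) : Epi (vdbPopc H hS Q) :=
  inferInstanceAs (Epi (HomologicalComplex.pOpcycles ((H.mapHomologicalComplex _).obj (vdbSplice hS Q).complex) 1))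

lemma vdbPopc_zero {S : ShortComplex C} (hS : S.ShortExact) [Projective S.X₂]
    (Q : ProjectiveResolution S.X₁) : H.map (Q.complex.d 1 0) ≫ vdbPopc H hS Q = 0 :=
  HomologicalComplex.d_pOpcycles ((H.mapHomologicalComplex _).obj (vdbSplice hS Q).complex) 2 1

lemma vdbPopc_comp {S : ShortComplex C} (hS : S.ShortExact) [Projective S.X₂]
    (Q : ProjectiveResolution S.X₁) : vdbPopc H hS Q ≫ vdbOpc H hS Q = H.map (vdbEps Q) :=
  HomologicalComplex.p_descOpcycles ((H.mapHomologicalComplex _).obj (vdbSplice hS Q).complex)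
    (show ((H.mapHomologicalComplex _).obj (vdbSplice hS Q).complex).X 1 ⟶ H.obj S.X₁ from H.map (vdbEps Q)) 2 (by simp) (vdbHEps H Q)

lemma vdbOpc_nat {S S' : ShortComplex C} (hS : S.ShortExact) [Projective S.X₂]
    (hS' : S'.ShortExact) [Projective S'.X₂]
    (Q : ProjectiveResolution S.X₁) (Q' : ProjectiveResolution S'.X₁) (φ : S ⟶ S') 
    (ψ : Q.complex ⟶ Q'.complex) (h : ψ.f 0 ≫ vdbEps Q' = vdbEps Q ≫ φ.τ₁) :
    HomologicalComplex.opcyclesMap ((H.mapHomologicalComplex _).map (vdbSpliceMap hS hS' Q Q' φ ψ h)) 1 ≫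
      vdbOpc H hS' Q' = vdbOpc H hS Q ≫ H.map φ.τ₁ := by
  have := vdbPopc_epi H hS Q
  rw [← cancel_epi (vdbPopc H hS Q), reassoc_of% vdbPopc_comp]
  have h2 : vdbPopc H hS Q ≫ HomologicalComplex.opcyclesMap ((H.mapHomologicalComplex _).map (vdbSpliceMap hS hS' Q Q' φ ψ h)) 1
    = H.map (ψ.f 0) ≫ vdbPopc H hS' Q' := 
    HomologicalComplex.p_opcyclesMap ((H.mapHomologicalComplex _).map (vdbSpliceMap hS hS' Q Q' φ ψ h)) 1
  rw [reassoc_of% h2, vdbPopc_comp, ← H.map_comp, ← H.map_comp, h]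

lemma vdbDel0_nat {S S' : ShortComplex C} (hS : S.ShortExact) [Projective S.X₂]
    (hS' : S'.ShortExact) [Projective S'.X₂]
    (Q : ProjectiveResolution S.X₁) (Q' : ProjectiveResolution S'.X₁) (φ : S ⟶ S') 
    (ψ : Q.complex ⟶ Q'.complex) (h : ψ.f 0 ≫ vdbEps Q' = vdbEps Q ≫ φ.τ₁) :
    (H.mapHomologicalComplex _ ⋙ HomologicalComplex.homologyFunctor D _ 1).map (vdbSpliceMap hS hS' Q Q' φ ψ h) ≫
      vdbDel0 H hS' Q' = vdbDel0 H hS Q ≫ H.map φ.τ₁ :=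
  vdb_glue (HomologicalComplex.homologyι_naturality
    ((H.mapHomologicalComplex _).map (vdbSpliceMap hS hS' Q Q' φ ψ h)) 1) (vdbOpc_nat H hS hS' Q Q' φ ψ h)

/-- first connecting map -/
noncomputable def vdbDel1 {S : ShortComplex C} (hS : S.ShortExact) [Projective S.X₂] :
    (H.leftDerived 1).obj S.X₃ ⟶ H.obj S.X₁ :=
  ((vdbSplice hS (projectiveResolution S.X₁)).isoLeftDerivedObj H 1).hom ≫
    vdbDel0 H hS (projectiveResolution S.X₁)

lemma vdbDel1_nat {S S' : ShortComplex C} (hS : S.ShortExact) [Projective S.X₂]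
    (hS' : S'.ShortExact) [Projective S'.X₂] (φ : S ⟶ S') :
    (H.leftDerived 1).map φ.τ₃ ≫ vdbDel1 H hS' =
      vdbDel1 H hS ≫ H.map φ.τ₁ := by
  let Q := projectiveResolution S.X₁
  let Q' := projectiveResolution S'.X₁
  let ψ := ProjectiveResolution.lift φ.τ₁ Q Q'
  have h : ψ.f 0 ≫ vdbEps Q' = vdbEps Q ≫ φ.τ₁ := ProjectiveResolution.lift_commutes_zero _ _ _
  have h1 := ProjectiveResolution.isoLeftDerivedObj_hom_naturality φ.τ₃ (vdbSplice hS Q)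
    (vdbSplice hS' Q') (vdbSpliceMap hS hS' Q Q' φ ψ h) 
    (by rw [vdbSplice_π, vdbSplice_π]; exact φ.comm₂₃) H 1
  exact vdb_glue h1 (vdbDel0_nat H hS hS' Q Q' φ ψ h)

variable [PreservesFiniteColimits H]

lemma vdbOpc_iso {S : ShortComplex C} (hS : S.ShortExact) [Projective S.X₂]
    (Q : ProjectiveResolution S.X₁) : IsIso (vdbOpc H hS Q) := by
  have hc := CokernelCofork.mapIsColimit _ (vdbEpsCok Q) H
  have := vdbPopc_epi H hS Q
  obtain ⟨l, hl'⟩ : ∃ l : H.obj S.X₁ ⟶ ((H.mapHomologicalComplex _).obj (vdbSplice hS Q).complex).opcycles 1,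
      H.map (vdbEps Q) ≫ l = vdbPopc H hS Q := 
    ⟨_, (CokernelCofork.IsColimit.desc' hc (vdbPopc H hS Q) (vdbPopc_zero H hS Q)).2⟩
  have : Epi (H.map (vdbEps Q)) := epi_of_isColimit_cofork hc
  refine ⟨l, ?_, ?_⟩
  · rw [← cancel_epi (vdbPopc H hS Q), reassoc_of% vdbPopc_comp, hl', Category.comp_id]
  · rw [← cancel_epi (H.map (vdbEps Q)), reassoc_of% hl', vdbPopc_comp, Category.comp_id]

lemma vdb_exact_transport {X X' Y Y' Z : D} {f : X ⟶ Y} {g : Y ⟶ Z} {f' : X' ⟶ Y'} {g' : Y' ⟶ Z}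
    (a : X' ≅ X) (e : Y ≅ Y') (w : f ≫ g = 0) (h : (ShortComplex.mk f g w).Exact)
    (h1 : f' = a.hom ≫ f ≫ e.hom) (h2 : e.hom ≫ g' = g) :
    ∃ w' : f' ≫ g' = 0, (ShortComplex.mk f' g' w').Exact := by
  have w' : f' ≫ g' = 0 := by rw [h1, Category.assoc, Category.assoc, h2, w, comp_zero]
  refine ⟨w', ShortComplex.exact_of_iso (S₁ := ShortComplex.mk f g w) (ShortComplex.isoMk a.symm e (Iso.refl _) ?_ ?_) h⟩
  · simp [h1]
  · simp [h2]

/-- retyped fromOpcycles -/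
noncomputable def vdbFop {S : ShortComplex C} (hS : S.ShortExact) [Projective S.X₂]
    (Q : ProjectiveResolution S.X₁) : 
    ((H.mapHomologicalComplex _).obj (vdbSplice hS Q).complex).opcycles 1 ⟶ H.obj S.X₂ :=
  ((H.mapHomologicalComplex _).obj (vdbSplice hS Q).complex).fromOpcycles 1 0

lemma vdbPopc_fop {S : ShortComplex C} (hS : S.ShortExact) [Projective S.X₂]
    (Q : ProjectiveResolution S.X₁) : vdbPopc H hS Q ≫ vdbFop H hS Q = H.map (vdbEps Q ≫ S.f) :=
  ((H.mapHomologicalComplex _).obj (vdbSplice hS Q).complex).p_fromOpcycles 1 0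

lemma vdbDel0_exact {S : ShortComplex C} (hS : S.ShortExact) [Projective S.X₂]
    (Q : ProjectiveResolution S.X₁) : Mono (vdbDel0 H hS Q) ∧ 
    ∃ w : vdbDel0 H hS Q ≫ H.map S.f = 0, (ShortComplex.mk _ _ w).Exact := by
  let K := (H.mapHomologicalComplex _).obj (vdbSplice hS Q).complex
  have := vdbPopc_epi H hS Q
  have := vdbOpc_iso H hS Q
  have h0 : vdbOpc H hS Q ≫ H.map S.f = vdbFop H hS Q := by
    rw [← cancel_epi (vdbPopc H hS Q), reassoc_of% vdbPopc_comp, ← H.map_comp, vdbPopc_fop]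
  refine ⟨inferInstanceAs (Mono (K.homologyι 1 ≫ vdbOpc H hS Q)), ?_⟩
  let T := ShortComplex.mk _ _ (K.homologyι_comp_fromOpcycles 1 0)
  have hT : T.Exact := ShortComplex.exact_of_f_is_kernel T (K.homologyIsKernel 1 0 (by simp))
  exact vdb_exact_transport (Iso.refl _) (asIso (vdbOpc H hS Q)) _ hT (Category.id_comp _).symm h0

lemma vdbDel1_exact {S : ShortComplex C} (hS : S.ShortExact) [Projective S.X₂] :
    Mono (vdbDel1 H hS) ∧ 
    ∃ w : vdbDel1 H hS ≫ H.map S.f = 0, (ShortComplex.mk _ _ w).Exact := by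
  obtain ⟨h1, w, h2⟩ := vdbDel0_exact H hS (projectiveResolution S.X₁)
  refine ⟨by unfold vdbDel1; infer_instance, ?_⟩
  exact vdb_exact_transport ((vdbSplice hS (projectiveResolution S.X₁)).isoLeftDerivedObj H 1) (Iso.refl _)
    w h2 (by simp [vdbDel1]) (Category.id_comp _)

end Splice


section Om
open Limits
variable {C : Type*} [Category* C] {K F : C ⥤ C} (i : K ⟶ F)
  {D : Type*} [Category* D] [Abelian D] {E : Type*} [Category* E] [Abelian E] 

/-- `T'` is the kernel of `T` along `i`. -/
def VdbOm (T' T : C ⥤ D) : Prop :=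
  ∃ δ : T' ⟶ K ⋙ T, ∀ X, Mono (δ.app X) ∧ ∃ w : δ.app X ≫ T.map (i.app X) = 0,
    (ShortComplex.mk _ _ w).Exact

variable {i}

lemma VdbOm.lift {T' T U' U : C ⥤ D} (h : VdbOm i T' T) (h' : VdbOm i U' U) (e : T ≅ U) :
    Nonempty (T' ≅ U') := by
  obtain ⟨δ, hδ⟩ := h
  obtain ⟨ε, hε⟩ := h'
  have m1 := fun X => (hδ X).1
  have m2 := fun X => (hε X).1
  have key : ∀ X, ∃ a : T'.obj X ⟶ U'.obj X, a ≫ ε.app X = δ.app X ≫ e.hom.app (K.obj X) := by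
    intro X
    obtain ⟨_, w, hw⟩ := hε X
    obtain ⟨_, w', hw'⟩ := hδ X
    have : Mono (ShortComplex.mk _ _ w).f := m2 X
    refine ⟨hw.lift (δ.app X ≫ e.hom.app (K.obj X)) ?_, hw.lift_f _ _⟩
    change (δ.app X ≫ e.hom.app (K.obj X)) ≫ U.map (i.app X) = 0
    rw [Category.assoc, ← e.hom.naturality, reassoc_of% w', zero_comp]
  have key' : ∀ X, ∃ a : U'.obj X ⟶ T'.obj X, a ≫ δ.app X = ε.app X ≫ e.inv.app (K.obj X) := by
    intro X
    obtain ⟨_, w, hw⟩ := hε X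
    obtain ⟨_, w', hw'⟩ := hδ X
    have : Mono (ShortComplex.mk _ _ w').f := m1 X
    refine ⟨hw'.lift (ε.app X ≫ e.inv.app (K.obj X)) ?_, hw'.lift_f _ _⟩
    change (ε.app X ≫ e.inv.app (K.obj X)) ≫ T.map (i.app X) = 0
    rw [Category.assoc, ← e.inv.naturality, reassoc_of% w, zero_comp]
  choose a ha using key
  choose b hb using key'
  refine ⟨NatIso.ofComponents (fun X => ⟨a X, b X, ?_, ?_⟩) ?_⟩
  · rw [← cancel_mono (δ.app X), Category.assoc, hb, reassoc_of% ha]; simp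
  · rw [← cancel_mono (ε.app X), Category.assoc, ha, reassoc_of% hb]; simp
  · intro X Y f
    dsimp
    have h1 := ε.naturality f
    have h2 := δ.naturality f
    have h3 := e.hom.naturality (K.map f)
    dsimp at h1 h2
    rw [← cancel_mono (ε.app Y), Category.assoc, Category.assoc, ha, h1, reassoc_of% ha, 
      reassoc_of% h2, h3]

lemma VdbOm.comp {T' T : C ⥤ D} (h : VdbOm i T' T) (G : D ⥤ E) [G.PreservesZeroMorphisms]
    [PreservesFiniteLimits G] [PreservesFiniteColimits G] : VdbOm i (T' ⋙ G) (T ⋙ G) := by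
  obtain ⟨δ, hδ⟩ := h
  refine ⟨Functor.whiskerRight δ G, fun X => ?_⟩
  obtain ⟨hm, w, hw⟩ := hδ X
  refine ⟨by dsimp; infer_instance, ?_, hw.map G⟩
  dsimp at w ⊢
  rw [← G.map_comp, w, G.map_zero]

lemma VdbOm.right {T' T U : C ⥤ D} (h : VdbOm i T' T) (e : T ≅ U) : VdbOm i T' U := by
  obtain ⟨δ, hδ⟩ := h
  refine ⟨δ ≫ Functor.whiskerLeft K e.hom, fun X => ?_⟩
  obtain ⟨hm, w, hw⟩ := hδ X
  refine ⟨by dsimp; infer_instance, ?_, 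
    ShortComplex.exact_of_iso (S₁ := ShortComplex.mk _ _ w) (ShortComplex.isoMk (Iso.refl _) (e.app _)
       (e.app _) ?_ ?_) hw⟩
  · dsimp; rw [Category.assoc, ← e.hom.naturality, reassoc_of% w, zero_comp]
  · dsimp; rw [Category.id_comp]
  · exact (e.hom.naturality (i.app X)).symm

lemma VdbOm.isZero {T' T : C ⥤ D} (h : VdbOm i T' T) (X : C) (hm : Mono (T.map (i.app X))) :
    IsZero (T'.obj X) := by
  obtain ⟨δ, hδ⟩ := h
  obtain ⟨h1, w, hw⟩ := hδ X
  have : δ.app X = 0 := by rw [← cancel_mono (T.map (i.app X)), w, zero_comp]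
  rw [IsZero.iff_id_eq_zero, ← cancel_mono (δ.app X), this]; simp

end Om

section FreeSES
open Limits
variable (R : Type u) [CommRing R]

noncomputable def vdbF : ModuleCat.{u} R ⥤ ModuleCat.{u} R := forget _ ⋙ ModuleCat.free R
noncomputable def vdbP : vdbF R ⟶ 𝟭 _ := (ModuleCat.adj R).counit

noncomputable def vdbK : ModuleCat.{u} R ⥤ ModuleCat.{u} R where
  obj X := kernel ((vdbP R).app X)
  map f := kernel.map _ _ ((vdbF R).map f) f ((vdbP R).naturality f).symm
  map_id X := by rw [← cancel_mono (kernel.ι _)]; simp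
  map_comp f g := by rw [← cancel_mono (kernel.ι _)]; simp

noncomputable def vdbi : vdbK R ⟶ vdbF R where
  app X := kernel.ι ((vdbP R).app X)
  naturality X Y f := by simp [vdbK]

noncomputable abbrev vdbS (X : ModuleCat.{u} R) : ShortComplex (ModuleCat.{u} R) where
  X₁ := (vdbK R).obj X
  X₂ := (vdbF R).obj X
  X₃ := X
  f := (vdbi R).app X
  g := (vdbP R).app X
  zero := kernel.condition _

noncomputable abbrev vdbSmap {X Y : ModuleCat.{u} R} (f : X ⟶ Y) : vdbS R X ⟶ vdbS R Y where
  τ₁ := (vdbK R).map f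
  τ₂ := (vdbF R).map f
  τ₃ := f
  comm₁₂ := (vdbi R).naturality f
  comm₂₃ := (vdbP R).naturality f

lemma vdbS_exact (X : ModuleCat.{u} R) : (vdbS R X).ShortExact where
  exact := ShortComplex.exact_of_f_is_kernel _ (kernelIsKernel ((vdbP R).app X))
  mono_f := inferInstanceAs (Mono (kernel.ι ((vdbP R).app X)))
  epi_g := inferInstanceAs (Epi ((ModuleCat.adj R).counit.app X))

instance vdbF_proj (X : ModuleCat.{u} R) : Projective ((vdbF R).obj X) :=
  ModuleCat.projective_of_free (ι := X) (Finsupp.basisSingleOne (R := R))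

instance vdbS_proj (X : ModuleCat.{u} R) : Projective (vdbS R X).X₂ := vdbF_proj R X

section
open Abelian
variable {R}
lemma vdbOm_ext1 {N X Y : ModuleCat.{u} R} (f : X ⟶ Y) (n : ℕ) (x : Abelian.Ext.{u} N X n) :
    (x.comp (Ext.mk₀ f) (add_zero n)).comp (vdbS_exact R Y).extClass rfl = 
      (x.comp (vdbS_exact R X).extClass rfl).comp (Ext.mk₀ ((vdbK R).map f)) (add_zero _) := by
  have := (vdbS_exact R X).extClass_naturality (vdbS_exact R Y) (vdbSmap R f)
  dsimp at this
  rw [Ext.comp_assoc (h₂₃ := zero_add 1) (h := by omega), ← this, Ext.comp_assoc (h := by omega)]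

lemma vdbOm_ext2 {N X : ModuleCat.{u} R} (n : ℕ) (x : Abelian.Ext.{u} N X n) :
    (x.comp (vdbS_exact R X).extClass rfl).comp (Ext.mk₀ (vdbS R X).f) (add_zero (n+1)) = 0 := by
  rw [Ext.comp_assoc (h₂₃ := add_zero 1) (h := by omega), ShortComplex.ShortExact.extClass_comp, Ext.comp_zero]

lemma vdbOm_ext3 {N X : ModuleCat.{u} R} (n : ℕ) (x : Abelian.Ext.{u} N X n)
   (h : ∀ X : ModuleCat.{u} R, Projective X → Subsingleton (Abelian.Ext.{u} N X n)) 
   (hx : x.comp (vdbS_exact R X).extClass rfl = 0) : x = 0 := by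
  obtain ⟨y, hy⟩ := Ext.covariant_sequence_exact₃ N (vdbS_exact R X) x rfl hx
  have := h _ (vdbF_proj R X)
  rw [← hy, Subsingleton.elim y 0, Ext.zero_comp]
end

lemma vdbOm_ext (N : ModuleCat.{u} R) (n : ℕ) 
   (h : ∀ X : ModuleCat.{u} R, Projective X → Subsingleton (Abelian.Ext.{u} N X n)) :
   VdbOm (vdbi R) (extFun N n) (extFun N (n+1)) := by
  refine ⟨{ app X := ModuleCat.ofHom ((vdbS_exact R X).extClass.postcompOfLinear R N rfl), 
            naturality X Y f := ?_ }, fun X => ⟨?_, ?_, ?_⟩⟩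
  · ext x
    exact vdbOm_ext1 f n x
  · rw [ModuleCat.mono_iff_injective]
    exact (injective_iff_map_eq_zero _).2 fun x hx => vdbOm_ext3 n x h hx
  · ext x
    exact vdbOm_ext2 n x
  · rw [ShortComplex.moduleCat_exact_iff]
    intro x hx
    exact Abelian.Ext.covariant_sequence_exact₁ N (vdbS_exact R X) x hx rfl

lemma vdb_extFun_zero_mono (N : ModuleCat.{u} R) {X Y : ModuleCat.{u} R} (f : X ⟶ Y) [Mono f] :
    Mono ((extFun N 0).map f) := by
  rw [ModuleCat.mono_iff_injective]
  exact Abelian.Ext.postcomp_mk₀_injective_of_mono N f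

lemma vdbOm_left (H : ModuleCat.{u} R ⥤ ModuleCat.{u} R) [H.Additive] [PreservesFiniteColimits H] (j : ℕ) :
    VdbOm (vdbi R) (H.leftDerived (j+1)) (H.leftDerived j) := by
  cases j with
  | zero =>
    refine VdbOm.right ?_ H.leftDerivedZeroIsoSelf.symm
    refine ⟨{ app X := vdbDel1 H (vdbS_exact R X), naturality X Y f := ?_}, fun X => ?_⟩
    · exact vdbDel1_nat H (vdbS_exact R X) (vdbS_exact R Y) (vdbSmap R f)
    · exact vdbDel1_exact H (vdbS_exact R X)
  | succ j =>
    have hz (X) : IsZero ((H.leftDerived (j+1)).obj ((vdbF R).obj X)) := 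
      Functor.isZero_leftDerived_obj_projective_succ _ _ _
    refine ⟨{ app X := (vdbShift H (vdbS_exact R X) j).hom, naturality X Y f := ?_}, fun X => ⟨?_, ?_, ?_⟩⟩
    · exact vdbShift_nat H (vdbS_exact R X) (vdbS_exact R Y) (vdbSmap R f) j
    · dsimp; infer_instance
    · exact (hz X).eq_of_tgt _ _
    · rw [ShortComplex.exact_iff_epi _ ((hz X).eq_of_tgt _ _)]
      dsimp; infer_instance

lemma vdb_abstract {E : Type*} [Category* E] [Abelian E] (N : ModuleCat.{u} R) (n : ℕ) 
    (hv : ∀ i < n, ∀ X : ModuleCat.{u} R, Projective X → Subsingleton (Abelian.Ext.{u} N X i))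
    (H : ModuleCat.{u} R ⥤ ModuleCat.{u} R) [H.Additive] [PreservesFiniteColimits H]
    (V G : ModuleCat.{u} R ⥤ E) [V.PreservesZeroMorphisms] [G.PreservesZeroMorphisms]
    [PreservesFiniteLimits V] [PreservesFiniteColimits V] 
    [PreservesFiniteLimits G] [PreservesFiniteColimits G] 
    (e : extFun N n ⋙ V ≅ H ⋙ G) :
    (∀ i j, i + j = n → Nonempty (extFun N i ⋙ V ≅ H.leftDerived j ⋙ G)) ∧
    (∀ j, n < j → ∀ X, IsZero ((H.leftDerived j ⋙ G).obj X)) := by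
  have h1 : ∀ j i, i + j = n → Nonempty (extFun N i ⋙ V ≅ H.leftDerived j ⋙ G) := by
    intro j
    induction j with
    | zero => 
      rintro i rfl
      exact ⟨e ≪≫ Functor.isoWhiskerRight H.leftDerivedZeroIsoSelf.symm G⟩
    | succ j ih =>
      intro i hi
      obtain ⟨e'⟩ := ih (i+1) (by omega)
      exact ((vdbOm_ext R N i (hv i (by omega))).comp V).lift ((vdbOm_left R H j).comp G) e'
  refine ⟨fun i j => h1 j i, ?_⟩
  intro j hj
  obtain ⟨k, rfl⟩ : ∃ k, j = n + 1 + k := ⟨j - (n+1), by omega⟩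
  induction k with
  | zero =>
    intro X
    obtain ⟨e'⟩ := h1 n 0 (by omega)
    refine ((vdbOm_left R H n).comp G).isZero X ?_
    have : (H.leftDerived n ⋙ G).map ((vdbi R).app X) = e'.inv.app _ ≫ 
      (extFun N 0 ⋙ V).map ((vdbi R).app X) ≫ e'.hom.app _ := by
      rw [e'.hom.naturality, ← Category.assoc, e'.inv_hom_id_app, Category.id_comp]
    rw [this]
    have := (vdbS_exact R X).mono_f
    dsimp at this
    have := vdb_extFun_zero_mono R N ((vdbi R).app X)
    dsimp only [Functor.comp_map]
    infer_instance
  | succ k ih =>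
    intro X
    refine ((vdbOm_left R H (n+1+k)).comp G).isZero X ?_
    exact ⟨fun _ _ _ => (ih (by omega) _).eq_of_tgt _ _⟩

end FreeSES


section Phi
open Abelian TensorProduct
variable {R : Type u} [CommRing R]

lemma vdb_dual_inj (N Y : Type u) [AddCommGroup N] [Module R N] [AddCommGroup Y] [Module R Y]
    [Module.Finite R N] [Module.Flat R Y] : Function.Injective (dualTensorHom R N Y) := by
  obtain ⟨m, f, hf⟩ := Module.Finite.exists_fin' R N
  refine .of_comp (f := f.lcomp R Y) ?_
  rw [← LinearMap.coe_comp, ← dualTensorHom_comp_rTensor_dualMap, LinearMap.coe_comp]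
  refine (dualTensorHom_bijective).1.comp ?_
  exact Module.Flat.rTensor_preserves_injective_linearMap _ (LinearMap.dualMap_injective_of_surjective hf)

lemma vdb_dual_bij [IsNoetherianRing R] (N Y : Type u) [AddCommGroup N] [Module R N] [AddCommGroup Y] [Module R Y]
    [Module.Finite R N] [Module.Flat R Y] : Function.Bijective (dualTensorHom R N Y) := by
  refine ⟨vdb_dual_inj N Y, fun g => ?_⟩
  obtain ⟨m, f, hf⟩ := Module.Finite.exists_fin' R N
  obtain ⟨t, ht⟩ := (dualTensorHom_bijective (R := R) (M := Fin m → R) (N := Y)).2 (g ∘ₗ f)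
  have hex : Function.Exact f.dualMap (f.ker.subtype).dualMap := by
    intro φ
    constructor
    · intro h
      have : f.ker ≤ φ.ker := fun x hx => LinearMap.congr_fun h ⟨x, hx⟩
      refine ⟨(f.ker.liftQ φ this) ∘ₗ (f.quotKerEquivOfSurjective hf).symm, ?_⟩
      ext i
      simp only [LinearMap.dualMap_apply, LinearMap.comp_apply, LinearMap.coe_single]
      have : (f.quotKerEquivOfSurjective hf).symm (f (Pi.single i 1)) = Submodule.Quotient.mk (Pi.single i 1) := by
        rw [LinearEquiv.symm_apply_eq]; rfl
      erw [this]; simp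
    · rintro ⟨ψ, rfl⟩
      ext x
      simp
  have hex' := Module.Flat.rTensor_exact Y hex
  have h0 : (f.ker.subtype.dualMap.rTensor Y) t = 0 := by
    apply vdb_dual_inj f.ker Y
    have := LinearMap.congr_fun (dualTensorHom_comp_rTensor_dualMap (P := Y) f.ker.subtype) t
    rw [LinearMap.comp_apply, LinearMap.comp_apply, ht] at this
    rw [this, map_zero]
    ext x
    simp
  obtain ⟨s, hs⟩ := (hex' t).1 h0
  refine ⟨s, ?_⟩
  have := LinearMap.congr_fun (dualTensorHom_comp_rTensor_dualMap (P := Y) f) s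
  rw [LinearMap.comp_apply, LinearMap.comp_apply, hs, ht] at this
  ext x
  obtain ⟨x, rfl⟩ := hf x
  exact (LinearMap.congr_fun this x).symm

/-- multiplication by an element -/
noncomputable def vdbMulx (X : ModuleCat.{u} R) (x : X) : ModuleCat.of R R ⟶ X :=
  ModuleCat.ofHom (LinearMap.toSpanSingleton R X x)

lemma vdbMulx_add (X : ModuleCat.{u} R) (x y : X) : vdbMulx X (x + y) = vdbMulx X x + vdbMulx X y := by
  ext; simp [vdbMulx]

lemma vdbMulx_smul (X : ModuleCat.{u} R) (r : R) (y : X) : vdbMulx X (r • y) = r • vdbMulx X y := by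
  ext; simp [vdbMulx]

lemma vdbMulx_comp {X Y : ModuleCat.{u} R} (f : X ⟶ Y) (x : X) : vdbMulx X x ≫ f = vdbMulx Y (f x) := by
  ext; simp [vdbMulx]

noncomputable def vdbPhi (N X : ModuleCat.{u} R) (i : ℕ) :
    (Abelian.Ext.{u} N (ModuleCat.of R R) i) ⊗[R] X →ₗ[R] Abelian.Ext.{u} N X i :=
  TensorProduct.lift (LinearMap.mk₂ R (fun e x => e.comp (Ext.mk₀ (vdbMulx X x)) (add_zero i))
    (fun a b c => by simp) (fun a b c => by simp [Ext.smul_comp])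
    (fun a b c => by simp [vdbMulx_add, Ext.mk₀_add]) (fun a b c => by simp [vdbMulx_smul, Ext.mk₀_smul, Ext.comp_smul]))

lemma vdbPhi_tmul (N X : ModuleCat.{u} R) (i : ℕ) (e : Abelian.Ext.{u} N (ModuleCat.of R R) i) (x : X) :
  vdbPhi N X i (e ⊗ₜ x) = e.comp (Ext.mk₀ (vdbMulx X x)) (add_zero i) := rfl

lemma vdbPhi_nat (N : ModuleCat.{u} R) {X Y : ModuleCat.{u} R} (f : X ⟶ Y) (i : ℕ) :
    (Ext.mk₀ f).postcompOfLinear R N (add_zero i) ∘ₗ vdbPhi N X i = vdbPhi N Y i ∘ₗ f.hom.lTensor _ := by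
  ext e x
  simp [vdbPhi_tmul, ← vdbMulx_comp, ← Ext.mk₀_comp_mk₀]

lemma vdbPhi_natl {N N' : ModuleCat.{u} R} (X : ModuleCat.{u} R) (a i j : ℕ) (h : a + i = j)
     (α : Abelian.Ext.{u} N' N a) :
    α.precompOfLinear R X h ∘ₗ vdbPhi N X i = vdbPhi N' X j ∘ₗ (α.precompOfLinear R _ h).rTensor _ := by
  ext e x
  simp [vdbPhi_tmul]

lemma vdbPhi_zero (N X : ModuleCat.{u} R) (h : Function.Bijective (dualTensorHom R N X)) :
    Function.Bijective (vdbPhi N X 0) := by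
  let e₁ : Abelian.Ext.{u} N (ModuleCat.of R R) 0 ≃ₗ[R] (N →ₗ[R] R) :=
    Ext.linearEquiv₀.trans (ModuleCat.homLinearEquiv (S := R))
  let e₂ : Abelian.Ext.{u} N X 0 ≃ₗ[R] (N →ₗ[R] X) :=
    Ext.linearEquiv₀.trans (ModuleCat.homLinearEquiv (S := R))
  have : vdbPhi N X 0 = e₂.symm.toLinearMap ∘ₗ dualTensorHom R N X ∘ₗ (e₁.toLinearMap.rTensor _) := by
    ext e x
    obtain ⟨f, rfl⟩ := Ext.linearEquiv₀ (R := R).symm.surjective e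
    simp [e₁, e₂, vdbPhi_tmul]
    congr 1
    have hf : Ext.linearEquiv₀ (R := R) (Ext.mk₀ f) = f := Ext.linearEquiv₀ (R := R).apply_symm_apply f
    rw [hf]
    ext n
    simp [vdbMulx]
    rfl
  rw [this]
  exact (e₂.symm.bijective.comp h).comp (LinearEquiv.rTensor _ e₁).bijective

lemma vdbPhi_step {S : ShortComplex (ModuleCat.{u} R)} (hS : S.ShortExact) [Projective S.X₂]
    (X : ModuleCat.{u} R) (i : ℕ) (h2 : Function.Bijective (vdbPhi S.X₂ X i)) 
    (h1 : Function.Bijective (vdbPhi S.X₁ X i)) : Function.Bijective (vdbPhi S.X₃ X (i+1)) := by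
  have ex (Y : ModuleCat.{u} R) : Function.Exact ((Ext.mk₀ S.f).precompOfLinear R Y (zero_add i))
     (hS.extClass.precompOfLinear R Y (add_comm 1 i)) := by
    intro x
    constructor
    · intro hx
      exact Ext.contravariant_sequence_exact₁ hS Y x (add_comm 1 i) hx
    · rintro ⟨y, rfl⟩
      exact ShortComplex.ShortExact.extClass_comp_assoc hS _ (h := add_comm 1 i)
  have sj (Y : ModuleCat.{u} R) : Function.Surjective (hS.extClass.precompOfLinear R Y (add_comm 1 i)) := by
    intro x
    exact Ext.contravariant_sequence_exact₃ hS Y x (Ext.eq_zero_of_projective _) (add_comm 1 i)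
  exact LinearMap.bijective_of_surjective_of_bijective_of_right_exact _ _ _ _ _ _ _
    (vdbPhi_natl X 0 i i (zero_add i) (Ext.mk₀ S.f)) 
    (vdbPhi_natl X 1 i (i+1) (add_comm 1 i) hS.extClass)
    (rTensor_exact _ (ex _) (sj _)) (ex X) h2.2 h1 (LinearMap.rTensor_surjective _ (sj _)) (sj X)

lemma vdb_cover [IsNoetherianRing R] (N : ModuleCat.{u} R) [Module.Finite R N] :
    ∃ S : ShortComplex (ModuleCat.{u} R), ∃ _ : S.ShortExact, Module.Finite R S.X₁ ∧
      Module.Finite R S.X₂ ∧ Module.Free R S.X₂ ∧ S.X₃ = N := by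
  obtain ⟨m, f, hf⟩ := Module.Finite.exists_fin' R N
  exact ⟨_, LinearMap.shortExact_shortComplexKer hf, inferInstanceAs (Module.Finite R f.ker),
    inferInstanceAs (Module.Finite R (Fin m → R)), inferInstanceAs (Module.Free R (Fin m → R)), rfl⟩

lemma vdbPhi_flat [IsNoetherianRing R] (X : ModuleCat.{u} R) [Module.Flat R X] (i : ℕ) :
    ∀ (N : ModuleCat.{u} R) [Module.Finite R N], Function.Bijective (vdbPhi N X i) := by
  induction i with
  | zero => intro N _; exact vdbPhi_zero _ _ (vdb_dual_bij _ _)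
  | succ i ih =>
    intro N _
    obtain ⟨S, hS, h1, h2, h3, rfl⟩ := vdb_cover N
    have : Projective S.X₂ := (IsProjective.iff_projective _).1 inferInstance
    exact vdbPhi_step hS X i (ih _) (ih _)

lemma vdbPhi_pd [IsNoetherianRing R] (X : ModuleCat.{u} R) (i : ℕ) :
    ∀ (N : ModuleCat.{u} R) [Module.Finite R N] [HasProjectiveDimensionLE N i], Function.Bijective (vdbPhi N X i) := by
  induction i with
  | zero => 
    intro N _ _
    have : Projective N := (projective_iff_hasProjectiveDimensionLE_zero _).2 inferInstance
    have : Module.Projective R N := (IsProjective.iff_projective _).2 this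
    exact vdbPhi_zero _ _ dualTensorHom_bijective
  | succ i ih =>
    intro N _ _
    obtain ⟨S, hS, h1, h2, h3, rfl⟩ := vdb_cover N
    have hp : Projective S.X₂ := (IsProjective.iff_projective _).1 inferInstance
    have hp' : HasProjectiveDimensionLE S.X₂ i := hasProjectiveDimensionLT_of_ge _ 1 _ (by omega)
    have : HasProjectiveDimensionLE S.X₁ i := hS.hasProjectiveDimensionLT_X₁ (i+1) hp' inferInstance
    exact vdbPhi_step hS X i (ih _) (ih _)

end Phi


section BaseIso
open Abelian TensorProduct

section
variable {R B L N X : Type u} [CommRing R] [CommRing B] (ι : B →+* R) (μ : R →+* B)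
    [AddCommGroup L] [Module R L] [AddCommGroup N] [Module R N] [AddCommGroup X] [Module R X]
    (hL2 : ∀ (r : R) (l : L), r • l = ι (μ r) • l)
    (c : N →+ B) (hc : ∀ r n, c (r • n) = μ r * c n)

/-- inner part -/
noncomputable def vdbThetaIn (l : L) : N ⊗[R] X →ₗ[R] L ⊗[R] X :=
  TensorProduct.lift (LinearMap.mk₂ R (fun n x => (ι (c n) • l) ⊗ₜ[R] x)
        (by intros; rw [map_add, map_add, add_smul, add_tmul]) 
        (by intro r n x; rw [hc, map_mul, mul_smul, ← hL2, smul_tmul']) 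
        (by intros; rw [tmul_add]) (by intros; rw [tmul_smul]))

lemma vdbThetaIn_tmul (l : L) (n : N) (x : X) : vdbThetaIn ι μ hL2 c hc l (n ⊗ₜ x) = (ι (c n) • l) ⊗ₜ[R] x := rfl

lemma vdbThetaIn_add (l l' : L) (w : N ⊗[R] X) : vdbThetaIn ι μ hL2 c hc (l + l') w = 
   vdbThetaIn ι μ hL2 c hc l w + vdbThetaIn ι μ hL2 c hc l' w := by
  induction w with
  | zero => simp
  | tmul n x => simp only [vdbThetaIn_tmul, smul_add, add_tmul]
  | add x y hx hy => rw [map_add, hx, hy, map_add, map_add]; abel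

lemma vdbThetaIn_smul (r : R) (l : L) (w : N ⊗[R] X) : vdbThetaIn ι μ hL2 c hc (r • l) w = 
   r • vdbThetaIn ι μ hL2 c hc l w := by
  induction w with
  | zero => simp
  | tmul n x => rw [vdbThetaIn_tmul, vdbThetaIn_tmul, smul_tmul', smul_comm]
  | add x y hx hy => rw [map_add, hx, hy, map_add, smul_add]

end

/-- transfer of tensor products -/
noncomputable def vdbThetaFun {R B L N X : Type u} [CommRing R] [CommRing B] (ι : B →+* R) (μ : R →+* B)
    [AddCommGroup L] [Module R L] [mBL : Module B L] [AddCommGroup N] [Module R N] [AddCommGroup X] [Module R X]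
    [mBW : Module B (N ⊗[R] X)]
    (hL : ∀ (b : B) (l : L), b • l = ι b • l) (hL2 : ∀ (r : R) (l : L), r • l = ι (μ r) • l)
    (hW : ∀ (b : B) (w : N ⊗[R] X), b • w = ι b • w)
    (c : N →+ B) (hc : ∀ r n, c (r • n) = μ r * c n) :
    L ⊗[B] (N ⊗[R] X) →+ L ⊗[R] X :=
  liftAddHom
    (AddMonoidHom.mk' (fun l => (vdbThetaIn (X := X) ι μ hL2 c hc l).toAddMonoidHom)
      (fun l l' => AddMonoidHom.ext fun w => vdbThetaIn_add ι μ hL2 c hc l l' w))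
    (by
      intro b l w
      change vdbThetaIn ι μ hL2 c hc _ w = vdbThetaIn ι μ hL2 c hc _ (b • w)
      rw [hW, map_smul, hL, vdbThetaIn_smul])

section
variable {R B L N X : Type u} [CommRing R] [CommRing B] (ι : B →+* R) (μ : R →+* B)
    [AddCommGroup L] [Module R L] [mBL : Module B L] [AddCommGroup N] [Module R N] [AddCommGroup X] [Module R X]
    [mBW : Module B (N ⊗[R] X)]
    (hL : ∀ (b : B) (l : L), b • l = ι b • l) (hL2 : ∀ (r : R) (l : L), r • l = ι (μ r) • l)
    (hW : ∀ (b : B) (w : N ⊗[R] X), b • w = ι b • w) (hμ : ∀ b, μ (ι b) = b)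
    (c : N →+ B) (hc : ∀ r n, c (r • n) = μ r * c n)

lemma vdbThetaFun_tmul (l : L) (n : N) (x : X) :
    vdbThetaFun ι μ hL hL2 hW c hc (l ⊗ₜ (n ⊗ₜ x)) = (ι (c n) • l) ⊗ₜ x := rfl

include hL hL2 hW hμ hc in
lemma vdbThetaFun_bij (hcb : Function.Bijective c) : Function.Bijective (vdbThetaFun ι μ hL hL2 hW c hc) := by
  obtain ⟨one, h1⟩ := hcb.2 1
  have hn (n : N) : n = ι (c n) • one := hcb.1 (by rw [hc, hμ, h1, mul_one])
  let g : L ⊗[R] X →+ L ⊗[B] (N ⊗[R] X) := liftAddHom 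
    { toFun l := ((TensorProduct.mk B L (N ⊗[R] X) l).toAddMonoidHom).comp 
        (TensorProduct.mk R N X one).toAddMonoidHom
      map_zero' := by ext; simp
      map_add' l l' := by ext; simp }
    (by
      intro r l x
      change (r • l) ⊗ₜ[B] (one ⊗ₜ[R] x) = l ⊗ₜ[B] (one ⊗ₜ[R] (r • x))
      rw [hL2, ← hL, smul_tmul, hW, smul_tmul', ← smul_tmul]
      congr 2
      apply hcb.1
      rw [hc, hc, hμ])
  have hg (l : L) (x : X) : g (l ⊗ₜ x) = l ⊗ₜ (one ⊗ₜ x) := rfl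
  refine Function.bijective_iff_has_inverse.2 ⟨g, fun t => ?_, fun t => ?_⟩
  · induction t with
    | zero => simp
    | add x y hx hy => rw [map_add, map_add, hx, hy]
    | tmul l w =>
      induction w with
      | zero => simp
      | add x y hx hy => rw [tmul_add, map_add, map_add, hx, hy]
      | tmul n x =>
        rw [vdbThetaFun_tmul, hg, ← hL, smul_tmul, hW, smul_tmul', ← hn]
  · induction t with
    | zero => simp
    | add x y hx hy => rw [map_add, map_add, hx, hy]
    | tmul l x => rw [hg, vdbThetaFun_tmul, h1, map_one, one_smul]

end

section
variable {R B : Type u} [CommRing R] [CommRing B] (ι : B →+* R) (μ : R →+* B) (hμ : ∀ b, μ (ι b) = b)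
  (N : ModuleCat.{u} R) (c : N →+ B) (hc : ∀ r n, c (r • n) = μ r * c n) (hcb : Function.Bijective c)
  (n : ℕ)

/-- `Ext^n(N,R)` as a `B`-module -/
noncomputable abbrev vdbM : ModuleCat.{u} B := (ModuleCat.restrictScalars ι).obj ((extFun N n).obj (ModuleCat.of R R))

include hμ hc hcb in
lemma vdb_ker_smul (X : ModuleCat.{u} R) (r : R) (l : Abelian.Ext.{u} N X n) : r • l = ι (μ r) • l := by
  have : r • 𝟙 N = ι (μ r) • 𝟙 N := by
    ext x
    change r • x = ι (μ r) • x
    exact hcb.1 (by rw [hc, hc, hμ])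
  have key (s : R) : s • l = (Ext.mk₀ (s • 𝟙 N)).comp l (zero_add n) := by
    rw [Ext.mk₀_smul, Ext.smul_comp, Ext.mk₀_id_comp]
  rw [key, key, this]

/-- functor -/
noncomputable abbrev vdbH : ModuleCat.{u} R ⥤ ModuleCat.{u} R := (tensoringLeft (ModuleCat.{u} R)).obj N

/-- restriction -/
noncomputable abbrev vdbV : ModuleCat.{u} R ⥤ ModuleCat.{u} B := ModuleCat.restrictScalars ι

/-- the additive map -/
noncomputable def vdbBaseAdd (X : ModuleCat.{u} R) :
    (vdbM ι N n) ⊗[B] ((vdbV ι).obj ((vdbH N).obj X)) →+ Abelian.Ext.{u} N X n :=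
  (vdbPhi N X n).toAddMonoidHom.comp
    (vdbThetaFun (L := Abelian.Ext.{u} N (ModuleCat.of R R) n) (N := N) (X := X)
      (mBL := (vdbM ι N n).isModule) (mBW := ((vdbV ι).obj ((vdbH N).obj X)).isModule) ι μ (fun _ _ => rfl) (vdb_ker_smul ι μ hμ N c hc hcb n _) 
      (fun _ _ => rfl) c hc)


lemma vdbBaseAdd_tmul (X : ModuleCat.{u} R) (l : Abelian.Ext.{u} N (ModuleCat.of R R) n) (y : N) (x : X) :
    vdbBaseAdd ι μ hμ N c hc hcb n X (TensorProduct.tmul B (M := vdbM ι N n) (N := (vdbV ι).obj ((vdbH N).obj X)) l (y ⊗ₜ[R] x)) = 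
      vdbPhi N X n ((ι (c y) • l) ⊗ₜ x) := rfl

lemma vdbBaseAdd_smul (X : ModuleCat.{u} R) (b : B) (t : (vdbM ι N n) ⊗[B] ((vdbV ι).obj ((vdbH N).obj X))) :
    vdbBaseAdd ι μ hμ N c hc hcb n X (b • t) = ι b • vdbBaseAdd ι μ hμ N c hc hcb n X t := by
  induction t with
  | zero => rw [smul_zero, map_zero, smul_zero]
  | add x y hx hy => rw [smul_add, map_add, hx, hy, map_add, smul_add]
  | tmul l w =>
    change N ⊗[R] X at w
    induction w using TensorProduct.induction_on with
    | zero => 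
      erw [tmul_zero]
      rw [smul_zero, map_zero, smul_zero]
    | add x y hx hy => 
      erw [tmul_add, smul_add]
      rw [map_add, map_add, smul_add]
      exact congr_arg₂ _ hx hy
    | tmul y x =>
      refine (vdbBaseAdd_tmul ι μ hμ N c hc hcb n X (ι b • l) y x).trans ?_
      refine Eq.trans ?_ (congr_arg _ (vdbBaseAdd_tmul ι μ hμ N c hc hcb n X l y x)).symm
      have (l : Abelian.Ext.{u} N (ModuleCat.of R R) n) : 
        vdbPhi N X n ((ι (c y) • ι b • l) ⊗ₜ[R] x) = ι b • vdbPhi N X n ((ι (c y) • l) ⊗ₜ[R] x) := by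
        rw [smul_comm, ← map_smul, smul_tmul']
      exact this l

lemma vdbBaseAdd_nat {X Y : ModuleCat.{u} R} (f : X ⟶ Y) (t : (vdbM ι N n) ⊗[B] ((vdbV ι).obj ((vdbH N).obj X))) :
    vdbBaseAdd ι μ hμ N c hc hcb n Y (((vdbV ι).map ((vdbH N).map f)).hom.lTensor _ t) = 
     (Ext.mk₀ f).postcompOfLinear R N (add_zero n) (vdbBaseAdd ι μ hμ N c hc hcb n X t) := by
  induction t with
  | zero => simp only [map_zero]
  | add x y hx hy => rw [map_add, map_add, hx, hy, map_add, map_add]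
  | tmul l w =>
    change N ⊗[R] X at w
    induction w using TensorProduct.induction_on with
    | zero => 
      erw [tmul_zero]
      simp only [map_zero]
    | add x y hx hy => 
      erw [tmul_add]
      simp only [map_add]
      exact congr_arg₂ _ hx hy
    | tmul y x =>
      refine (vdbBaseAdd_tmul ι μ hμ N c hc hcb n Y l y (f x)).trans ?_
      refine Eq.trans ?_ (congr_arg _ (vdbBaseAdd_tmul ι μ hμ N c hc hcb n X l y x)).symm
      exact (LinearMap.congr_fun (vdbPhi_nat N f n) ((ι (c y) • l) ⊗ₜ x)).symm

lemma vdbBaseAdd_bij [IsNoetherianRing R] [Module.Finite R N] [HasProjectiveDimensionLE N n] (X : ModuleCat.{u} R) :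
    Function.Bijective (vdbBaseAdd ι μ hμ N c hc hcb n X) := 
  (vdbPhi_pd X n N).comp (vdbThetaFun_bij (L := Abelian.Ext.{u} N (ModuleCat.of R R) n) (N := N) (X := X)
      (mBL := (vdbM ι N n).isModule) (mBW := ((vdbV ι).obj ((vdbH N).obj X)).isModule) ι μ (fun _ _ => rfl) (vdb_ker_smul ι μ hμ N c hc hcb n _) 
      (fun _ _ => rfl) hμ c hc hcb)

/-- base iso, componentwise -/
noncomputable def vdbBaseEquiv [IsNoetherianRing R] [Module.Finite R N] [HasProjectiveDimensionLE N n] (X : ModuleCat.{u} R) :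
    (vdbM ι N n) ⊗[B] ((vdbV ι).obj ((vdbH N).obj X)) ≃ₗ[B] ((extFun N n ⋙ vdbV ι).obj X) :=
  LinearEquiv.ofBijective
    ({ toFun := vdbBaseAdd ι μ hμ N c hc hcb n X
       map_add' := map_add _ 
       map_smul' := vdbBaseAdd_smul ι μ hμ N c hc hcb n X } : (vdbM ι N n) ⊗[B] ((vdbV ι).obj ((vdbH N).obj X)) →ₗ[B] ((extFun N n ⋙ vdbV ι).obj X))
    (vdbBaseAdd_bij ι μ hμ N c hc hcb n X)

/-- base iso -/
noncomputable def vdbBaseIso [IsNoetherianRing R] [Module.Finite R N] [HasProjectiveDimensionLE N n] :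
    extFun N n ⋙ vdbV ι ≅ vdbH N ⋙ (vdbV ι ⋙ tensorLeft (vdbM ι N n)) :=
  Iso.symm <| NatIso.ofComponents (fun X => (vdbBaseEquiv ι μ hμ N c hc hcb n X).toModuleIso) (by
    intro X Y f
    refine ModuleCat.hom_ext (LinearMap.ext fun t => ?_)
    exact vdbBaseAdd_nat ι μ hμ N c hc hcb n f t)

end
end BaseIso


section Assembly
open Abelian TensorProduct

lemma vdb_hv {R : Type u} [CommRing R] [IsNoetherianRing R] (N : ModuleCat.{u} R) [Module.Finite R N] (i : ℕ)
    (h : Subsingleton (Abelian.Ext.{u} N (ModuleCat.of R R) i)) (X : ModuleCat.{u} R) [Module.Flat R X] :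
    Subsingleton (Abelian.Ext.{u} N X i) :=
  (vdbPhi_flat X i N).2.subsingleton

lemma vdb_zeroIso {C E : Type*} [Category* C] [Category* E] [Limits.HasZeroMorphisms E] (F G : C ⥤ E)
    (hF : ∀ X, Limits.IsZero (F.obj X)) (hG : ∀ X, Limits.IsZero (G.obj X)) : Nonempty (F ≅ G) :=
  ⟨NatIso.ofComponents (fun X => (hF X).iso (hG X)) (fun _ => (hF _).eq_of_src _ _)⟩

/-- `B` as a module over the enveloping algebra -/
noncomputable def vdbN (A B : Type u) [CommRing A] [CommRing B] [Algebra A B] : ModuleCat.{u} (B ⊗[A] B) :=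
  letI := ((Algebra.TensorProduct.lmul' A (S := B)).toRingHom).toModule
  ModuleCat.of (B ⊗[A] B) B

/-- surjection onto `B` -/
noncomputable def vdbSurj (A B : Type u) [CommRing A] [CommRing B] [Algebra A B] : (B ⊗[A] B) →ₗ[B ⊗[A] B] vdbN A B :=
  { toFun := Algebra.TensorProduct.lmul' A (S := B), map_add' := map_add _, map_smul' := fun r x => map_mul (Algebra.TensorProduct.lmul' A (S := B)) r x }

lemma vdbSurj_surj (A B : Type u) [CommRing A] [CommRing B] [Algebra A B] : Function.Surjective (vdbSurj A B) := by
  intro b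
  change B at b
  exact ⟨b ⊗ₜ 1, (Algebra.TensorProduct.lmul'_apply_tmul (R := A) b 1).trans (mul_one b)⟩

instance vdbN_finite (A B : Type u) [CommRing A] [CommRing B] [Algebra A B] : Module.Finite (B ⊗[A] B) (vdbN A B) :=
  Module.Finite.of_surjective _ (vdbSurj_surj A B)

lemma vdb_tor_pos (A B : Type u) [CommRing A] [CommRing B] [Algebra A B] (j : ℕ) :
    torEnvelopingFunctor A B (j : ℤ) = (vdbH (vdbN A B)).leftDerived j ⋙ vdbV (algebraMap B (B ⊗[A] B)) :=
  if_pos (Int.natCast_nonneg j)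

lemma vdb_ext_pos (A B : Type u) [CommRing A] [CommRing B] [Algebra A B] (j : ℕ) :
    extEnvelopingFunctor A B (j : ℤ) = (Ext (B ⊗[A] B) (ModuleCat.{u} (B ⊗[A] B)) j).obj (Opposite.op (vdbN A B)) ⋙ vdbV (algebraMap B (B ⊗[A] B)) :=
  if_pos (Int.natCast_nonneg j)

lemma vdb_cond (A B : Type u) [CommRing A] [CommRing B] [Algebra A B] [IsNoetherianRing (B ⊗[A] B)] 
    (n : ℕ) (hpd : HasProjectiveDimensionLE (vdbN A B) n) 
      (hv : ∀ i < n, Subsingleton (Abelian.Ext.{u} (vdbN A B) (ModuleCat.of (B ⊗[A] B) (B ⊗[A] B)) i))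
      (hfl : Module.Flat B (vdbM (algebraMap B (B ⊗[A] B)) (vdbN A B) n)) (i : ℤ) : Nonempty
        (extEnvelopingFunctor A B i ≅
          torEnvelopingFunctor A B ((n : ℤ) - i) ⋙ tensorLeft (vdbM (algebraMap B (B ⊗[A] B)) (vdbN A B) n)) := by
  let N := vdbN A B
  let ι := algebraMap B (B ⊗[A] B)
  let μ : (B ⊗[A] B) →+* B := (Algebra.TensorProduct.lmul' A (S := B)).toRingHom
  have hμ : ∀ b, μ (ι b) = b := fun b => by simp [μ, ι]
  have e := vdbBaseIso ι μ hμ N (AddMonoidHom.id B) (fun r n => rfl) Function.bijective_id n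
  obtain ⟨h1, h2⟩ := vdb_abstract (B ⊗[A] B) N n (fun i hi X hX => 
    have : Module.Projective (B ⊗[A] B) X := (IsProjective.iff_projective _).2 hX
    vdb_hv N i (hv i hi) X) (vdbH N) (vdbV ι) (vdbV ι ⋙ tensorLeft (vdbM ι N n)) e
  have hz : Limits.IsZero (ModuleCat.of B PUnit.{u+1}) := ModuleCat.isZero_of_subsingleton _
  by_cases hi : 0 ≤ i
  · lift i to ℕ using hi
    by_cases hin : i ≤ n
    · obtain ⟨j, rfl⟩ := Nat.exists_eq_add_of_le hin
      obtain ⟨f⟩ := h1 i j rfl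
      have hj : ((i + j : ℕ) : ℤ) - i = j := by push_cast; ring
      rw [hj]
      refine ⟨?_ ≪≫ Functor.isoWhiskerRight (vdbExtIso N i) (vdbV ι) ≪≫ f ≪≫ ?_⟩
      · exact eqToIso (vdb_ext_pos A B i)
      · exact Functor.isoWhiskerRight (eqToIso (vdb_tor_pos A B j).symm) (tensorLeft (vdbM ι N (i+j)))
    · refine vdb_zeroIso _ _ (fun X => ?_) (fun X => ?_)
      · rw [vdb_ext_pos]
        have : Subsingleton (Abelian.Ext.{u} (vdbN A B) X i) := HasProjectiveDimensionLT.subsingleton (X := vdbN A B) (n + 1) i (by omega) X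
        exact ((Functor.isoWhiskerRight (vdbExtIso N i) (vdbV ι)).app X).isZero_iff.2 
          ((vdbV ι).map_isZero (ModuleCat.isZero_of_subsingleton (ModuleCat.of _ (Abelian.Ext.{u} (vdbN A B) X i))))
      · have : torEnvelopingFunctor A B ((n : ℤ) - i) = (Functor.const _).obj (ModuleCat.of B PUnit) := if_neg (by omega)
        rw [this]
        exact (tensorLeft (vdbM ι N n)).map_isZero hz
  · refine vdb_zeroIso _ _ (fun X => ?_) (fun X => ?_)
    · have : extEnvelopingFunctor A B i = (Functor.const _).obj (ModuleCat.of B PUnit) := if_neg hi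
      rw [this]; exact hz
    · obtain ⟨j, hj⟩ := Int.eq_ofNat_of_zero_le (a := (n : ℤ) - i) (by omega)
      rw [hj]
      have := h2 j (by omega) X
      exact (Functor.isoWhiskerRight (eqToIso (vdb_tor_pos A B j)) (tensorLeft (vdbM ι N n))).app X |>.isZero_iff.2 this

end Assembly


section Rees
open Abelian TensorProduct RingTheory.Sequence
variable {R : Type u} [CommRing R]

lemma vdb_rees (N : ModuleCat.{u} R) (rs : List R) : 
    ∀ (M : Type u) [AddCommGroup M] [Module R M] (_ : IsWeaklyRegular M rs) (_ : ∀ r ∈ rs, r ∈ Module.annihilator R N),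
    (∀ i < rs.length, Subsingleton (Abelian.Ext.{u} N (ModuleCat.of R M) i)) ∧ 
    Nonempty (Abelian.Ext.{u} N (ModuleCat.of R M) rs.length ≃ₗ[R] (N →ₗ[R] M ⧸ (Ideal.ofList rs • ⊤ : Submodule R M))) := by
  induction rs with
  | nil => 
    intro M _ _ _ _
    refine ⟨by simp, ⟨?_⟩⟩
    let e1 : Abelian.Ext.{u} N (ModuleCat.of R M) 0 ≃ₗ[R] (N ⟶ ModuleCat.of R M) := Ext.linearEquiv₀
    let e2 : (N ⟶ ModuleCat.of R M) ≃ₗ[R] (N →ₗ[R] M) := ModuleCat.homLinearEquiv (S := R)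
    let e3 : M ≃ₗ[R] M ⧸ (Ideal.ofList ([] : List R) • ⊤ : Submodule R M) := (Submodule.quotEquivOfEqBot _ (by simp)).symm
    exact e1.trans (e2.trans (LinearEquiv.congrRight e3))
  | cons r rs ih =>
    intro M _ _ h hrs
    rw [isWeaklyRegular_cons_iff] at h
    obtain ⟨h1, h2⟩ := h
    have hr : r ∈ Module.annihilator R N := hrs r (by simp)
    obtain ⟨ih1, ⟨e⟩⟩ := ih _ h2 (fun s hs => hrs s (by simp [hs]))
    have hS := IsSMulRegular.smulShortComplex_shortExact (M := ModuleCat.of R M) h1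
    have hz (i : ℕ) (x : Abelian.Ext.{u} N (ModuleCat.of R M) i) : x.comp (Ext.mk₀ (ModuleCat.smulShortComplex (ModuleCat.of R M) r).f) (add_zero i) = 0 := by
      have h0 : r • 𝟙 N = 0 := by
        ext y
        exact Module.mem_annihilator.1 hr y
      have : r • x = 0 := by
        have : r • x = (Ext.mk₀ (r • 𝟙 N)).comp x (zero_add i) := by
          rw [Ext.mk₀_smul, Ext.smul_comp, Ext.mk₀_id_comp]
        rw [this, h0, Ext.mk₀_zero, Ext.zero_comp]
      rw [Ext.smul_eq_comp_mk₀] at this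
      exact this
    have hsurj (i : ℕ) : Function.Surjective (hS.extClass.postcompOfLinear R N (rfl : i + 1 = i + 1)) := by
      intro x
      obtain ⟨y, hy⟩ := Ext.covariant_sequence_exact₁ N hS x (hz _ x) rfl
      exact ⟨y, hy⟩
    have hv : ∀ i < rs.length + 1, Subsingleton (Abelian.Ext.{u} N (ModuleCat.of R M) i) := by
      intro i hi
      cases i with
      | zero =>
        refine subsingleton_of_forall_eq 0 fun x => ?_
        have := hS.mono_f
        exact Ext.postcomp_mk₀_injective_of_mono N (ModuleCat.smulShortComplex (ModuleCat.of R M) r).f ((hz 0 x).trans (hz 0 0).symm)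
      | succ i =>
        have : Subsingleton (Abelian.Ext.{u} N (ModuleCat.smulShortComplex (ModuleCat.of R M) r).X₃ i) := ih1 i (by omega)
        exact (hsurj i).subsingleton
    refine ⟨by simpa using hv, ⟨?_⟩⟩
    have hb : Function.Bijective (hS.extClass.postcompOfLinear R N (rfl : rs.length + 1 = rs.length + 1)) := by
      refine ⟨(injective_iff_map_eq_zero _).2 fun x hx => ?_, hsurj _⟩
      obtain ⟨y, hy⟩ := Ext.covariant_sequence_exact₃ N hS x rfl hx
      have : Subsingleton (Abelian.Ext.{u} N (ModuleCat.smulShortComplex (ModuleCat.of R M) r).X₂ rs.length) := hv rs.length (by omega)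
      rw [← hy, Subsingleton.elim y 0, Ext.zero_comp]
    let e3 := (Submodule.quotOfListConsSMulTopEquivQuotSMulTopInner M r rs).symm
    let e4 : Abelian.Ext.{u} N (ModuleCat.of R (QuotSMulTop r M)) rs.length ≃ₗ[R] Abelian.Ext.{u} N (ModuleCat.of R M) (rs.length + 1) := 
      LinearEquiv.ofBijective _ hb
    exact e4.symm.trans (e.trans (LinearEquiv.congrRight e3))

lemma vdb_hom_cyclic {N Q : Type u} [AddCommGroup N] [Module R N] [AddCommGroup Q] [Module R Q] (π : R →ₗ[R] N) 
    (hπ : Function.Surjective π) (hQ : ∀ r ∈ LinearMap.ker π, ∀ q : Q, r • q = 0) : Nonempty ((N →ₗ[R] Q) ≃ₗ[R] Q) := by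
  let ev : (N →ₗ[R] Q) →ₗ[R] Q := LinearMap.applyₗ (π 1)
  refine ⟨LinearEquiv.ofBijective ev ⟨fun f g h => ?_, fun q => ?_⟩⟩
  · ext x
    obtain ⟨r, rfl⟩ := hπ x
    have h : f (π 1) = g (π 1) := h
    rw [← mul_one r, ← smul_eq_mul, map_smul, map_smul, map_smul, h]
  · refine ⟨((LinearMap.ker π).liftQ (LinearMap.toSpanSingleton R Q q) (fun r hr => by rw [LinearMap.mem_ker]; exact hQ r hr q)) ∘ₗ 
      (π.quotKerEquivOfSurjective hπ).symm.toLinearMap, ?_⟩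
    have : (π.quotKerEquivOfSurjective hπ).symm (π 1) = Submodule.Quotient.mk 1 := by
      rw [LinearEquiv.symm_apply_eq]; rfl
    rw [LinearMap.applyₗ_apply_apply, LinearMap.comp_apply, LinearEquiv.coe_coe, this, Submodule.liftQ_apply, LinearMap.toSpanSingleton_apply_one]

end Rees

section LocB

lemma vdb_loc_restrict {R B L L' : Type u} [CommRing R] [CommRing B] [Algebra B R] (μ : R →+* B)
    (hμ : ∀ b, μ (algebraMap B R b) = b) [AddCommGroup L] [Module R L] [Module B L] [IsScalarTower B R L]
    [AddCommGroup L'] [Module R L'] [Module B L'] [IsScalarTower B R L']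
    (hL : ∀ (r : R) (l : L), r • l = μ r • l) (f : L →ₗ[R] L') (q : Ideal B) [q.IsPrime]
    [IsLocalizedModule (q.comap μ).primeCompl f] : IsLocalizedModule q.primeCompl (f.restrictScalars B) := by
  have hL' (r : R) (y : L') : r • y = μ r • y := by
    obtain ⟨⟨x, t⟩, ht⟩ := IsLocalizedModule.surj (q.comap μ).primeCompl f y
    apply IsLocalizedModule.smul_injective f t
    change t.1 • r • y = t.1 • μ r • y
    have ht : t.1 • y = f x := ht
    rw [smul_comm, ht, smul_comm, ht, ← f.map_smul, hL, ← algebraMap_smul R (μ r) x, ← algebraMap_smul R (μ r) (f x), f.map_smul]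
  refine ⟨fun b => ?_, fun y => ?_, fun {x y} h => ?_⟩
  · have hb : algebraMap B R b ∈ (q.comap μ).primeCompl := fun h => b.2 (by simpa [hμ] using h)
    have := IsLocalizedModule.map_units f (⟨_, hb⟩ : (q.comap μ).primeCompl)
    rw [Module.End.isUnit_iff] at this ⊢
    convert this using 1
    ext y
    change (b : B) • y = algebraMap B R b • y
    rw [algebraMap_smul]
  · obtain ⟨⟨x, t⟩, ht⟩ := IsLocalizedModule.surj (q.comap μ).primeCompl f y
    exact ⟨⟨x, ⟨μ t.1, t.2⟩⟩, (hL' _ _).symm.trans ht⟩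
  · obtain ⟨c, hc⟩ := IsLocalizedModule.exists_of_eq (S := (q.comap μ).primeCompl) (f := f) h
    exact ⟨⟨μ c.1, c.2⟩, (hL _ _).symm.trans (hc.trans (hL _ _))⟩

open TensorProduct in
lemma vdb_flat {R B L N : Type u} [CommRing R] [CommRing B] [Algebra B R] (μ : R →+* B)
    (hμ : ∀ b, μ (algebraMap B R b) = b) [AddCommGroup L] [Module R L] [Module B L] [IsScalarTower B R L]
    [AddCommGroup N] [Module R N] [Module B N] [IsScalarTower B R N]
    (hL : ∀ (r : R) (l : L), r • l = μ r • l) (hN : ∀ (r : R) (l : N), r • l = μ r • l) [Module.Flat B N]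
    (he : ∀ (q : Ideal B) [q.IsMaximal], Nonempty ((Localization.AtPrime (q.comap μ) ⊗[R] L) ≃ₗ[R] (Localization.AtPrime (q.comap μ) ⊗[R] N))) :
    Module.Flat B L := by
  have hl1 (q : Ideal B) [q.IsMaximal] : IsLocalizedModule.AtPrime q
    ((TensorProduct.mk R (Localization.AtPrime (q.comap μ)) L 1).restrictScalars B) := vdb_loc_restrict μ hμ hL _ q
  refine @Module.flat_of_isLocalized_maximal B B _ _ _ L _ _ _ _ (fun q _ => Localization.AtPrime (q.comap μ) ⊗[R] L) _ _ _ _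
    (fun q _ => (TensorProduct.mk R (Localization.AtPrime (q.comap μ)) L 1).restrictScalars B) (fun q _ => hl1 q) ?_
  intro q _
  have hl2 : IsLocalizedModule q.primeCompl ((TensorProduct.mk R (Localization.AtPrime (q.comap μ)) N 1).restrictScalars B) := vdb_loc_restrict μ hμ hN _ q
  obtain ⟨e⟩ := he q
  have : Module.Flat B (Localization.AtPrime (q.comap μ) ⊗[R] N) := 
    Module.Flat.of_linearEquiv (IsLocalizedModule.linearEquiv q.primeCompl ((TensorProduct.mk R (Localization.AtPrime (q.comap μ)) N 1).restrictScalars B) 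
      (TensorProduct.mk B (Localization.AtPrime q) N 1))
  exact Module.Flat.of_linearEquiv (e.restrictScalars B)
end LocB

set_option linter.unusedSectionVars false

section LocR
open Abelian TensorProduct RingTheory.Sequence
variable {R : Type u} [CommRing R]

/-- local condition at `p` -/
def VdbLoc (I : Ideal R) (n : ℕ) (p : Ideal R) [p.IsPrime] : Prop :=
  ∃ rs : List R, rs.length = n ∧ (∀ r ∈ rs, r ∈ I) ∧ IsWeaklyRegular (Localization.AtPrime p) rs ∧ 
    (Ideal.ofList rs).map (algebraMap R (Localization.AtPrime p)) = I.map (algebraMap R (Localization.AtPrime p))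

lemma vdb_tensorN (N : Type u) [AddCommGroup N] [Module R N] (π : R →ₗ[R] N) (hπ : Function.Surjective π)
    (M : Type u) [AddCommGroup M] [Module R M] (J : Ideal R) (hJ : (J • ⊤ : Submodule R M) = (LinearMap.ker π : Ideal R) • ⊤) : 
    Nonempty (M ⊗[R] N ≃ₗ[R] M ⧸ (J • ⊤ : Submodule R M)) := by
  let I : Ideal R := LinearMap.ker π
  let e : (R ⧸ I) ≃ₗ[R] N := π.quotKerEquivOfSurjective hπ
  exact ⟨(TensorProduct.comm R M N) ≪≫ₗ (TensorProduct.congr e.symm (LinearEquiv.refl R M)) ≪≫ₗ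
    TensorProduct.quotTensorEquivQuotSMul M I ≪≫ₗ Submodule.quotEquivOfEq _ _ hJ.symm⟩

lemma vdb_smul_top_eq {p : Ideal R} [p.IsPrime] {I J : Ideal R} 
   (h : J.map (algebraMap R (Localization.AtPrime p)) = I.map (algebraMap R (Localization.AtPrime p))) :
   (J • ⊤ : Submodule R (Localization.AtPrime p)) = I • ⊤ := by
  rw [Ideal.smul_top_eq_map, Ideal.smul_top_eq_map, h]

lemma vdb_ker_ann (N : Type u) [AddCommGroup N] [Module R N] (π : R →ₗ[R] N) (hπ : Function.Surjective π) {r : R} 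
   (h : r ∈ LinearMap.ker π) : r ∈ Module.annihilator R N := by
  rw [Module.mem_annihilator]
  intro x
  obtain ⟨s, rfl⟩ := hπ x
  rw [← map_smul, smul_eq_mul, mul_comm, ← smul_eq_mul, map_smul, LinearMap.mem_ker.1 h, smul_zero]

variable [IsNoetherianRing R] (N : ModuleCat.{u} R) (π : R →ₗ[R] N) (hπ : Function.Surjective π) (n : ℕ)

include hπ in
lemma vdb_locExt (p : Ideal R) [p.IsPrime] (h : VdbLoc (LinearMap.ker π) n p) :
    (∀ i < n, Subsingleton (Abelian.Ext.{u} N (ModuleCat.of R (Localization.AtPrime p)) i)) ∧ 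
    Nonempty (Abelian.Ext.{u} N (ModuleCat.of R (Localization.AtPrime p)) n ≃ₗ[R] (Localization.AtPrime p ⊗[R] N)) := by
  obtain ⟨rs, rfl, hI, hreg, hmap⟩ := h
  obtain ⟨h1, ⟨e⟩⟩ := vdb_rees N rs (Localization.AtPrime p) hreg (fun r hr => vdb_ker_ann N π hπ (hI r hr))
  refine ⟨h1, ?_⟩
  obtain ⟨e1⟩ := vdb_tensorN N π hπ (Localization.AtPrime p) (Ideal.ofList rs) (vdb_smul_top_eq hmap)
  obtain ⟨e2⟩ := vdb_hom_cyclic (Q := Localization.AtPrime p ⧸ (Ideal.ofList rs • ⊤ : Submodule R (Localization.AtPrime p))) π hπ 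
    (fun r hr q => by
      obtain ⟨x, rfl⟩ := Submodule.mkQ_surjective _ q
      rw [← map_smul, Submodule.mkQ_apply, Submodule.Quotient.mk_eq_zero, vdb_smul_top_eq hmap]
      exact Submodule.smul_mem_smul hr trivial)
  exact ⟨e.trans (e2.trans e1.symm)⟩

include hπ in
lemma vdb_locL [Module.Finite R N] (p : Ideal R) [p.IsPrime] (h : VdbLoc (LinearMap.ker π) n p) :
    Nonempty (Localization.AtPrime p ⊗[R] Abelian.Ext.{u} N (ModuleCat.of R R) n ≃ₗ[R] (Localization.AtPrime p ⊗[R] N)) := by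
  obtain ⟨_, ⟨e⟩⟩ := vdb_locExt N π hπ n p h
  exact ⟨(TensorProduct.comm _ _ _).trans ((LinearEquiv.ofBijective _ (vdbPhi_flat (ModuleCat.of R (Localization.AtPrime p)) n N)).trans e)⟩

include hπ in
lemma vdb_extvan [Module.Finite R N] (h : ∀ (p : Ideal R) [p.IsMaximal], LinearMap.ker π ≤ p → VdbLoc (LinearMap.ker π) n p) (i : ℕ) (hi : i < n) :
    Subsingleton (Abelian.Ext.{u} N (ModuleCat.of R R) i) := by
  apply Module.subsingleton_of_localization_maximal (R := R) (fun P _ => Localization.AtPrime P ⊗[R] Abelian.Ext.{u} N (ModuleCat.of R R) i) 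
    (fun P _ => TensorProduct.mk R (Localization.AtPrime P) _ 1)
  intro p _
  let e := (TensorProduct.comm _ _ _).trans ((LinearEquiv.ofBijective _ (vdbPhi_flat (ModuleCat.of R (Localization.AtPrime p)) i N)))
  suffices Subsingleton (Abelian.Ext.{u} N (ModuleCat.of R (Localization.AtPrime p)) i) from e.toEquiv.subsingleton
  by_cases hp : LinearMap.ker π ≤ p
  · exact (vdb_locExt N π hπ n p (h p hp)).1 i hi
  · obtain ⟨r, hr, hrp⟩ := SetLike.not_le_iff_exists.1 hp
    refine subsingleton_of_forall_eq 0 fun x => ?_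
    have h0 : r • 𝟙 N = 0 := by
      ext y
      exact Module.mem_annihilator.1 (vdb_ker_ann N π hπ hr) y
    have h1 : r • x = 0 := by
        have : r • x = (Ext.mk₀ (r • 𝟙 N)).comp x (zero_add i) := by
          rw [Ext.mk₀_smul, Ext.smul_comp, Ext.mk₀_id_comp]
        rw [this, h0, Ext.mk₀_zero, Ext.zero_comp]
    let g : ModuleCat.of R (Localization.AtPrime p) ⟶ ModuleCat.of R (Localization.AtPrime p) := 
      ModuleCat.ofHom (LinearMap.mulLeft R (IsLocalization.mk' (Localization.AtPrime p) 1 (⟨r, hrp⟩ : p.primeCompl)))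
    have h2 : (r • 𝟙 (ModuleCat.of R (Localization.AtPrime p))) ≫ g = 𝟙 _ := by
      ext y
      change IsLocalization.mk' (Localization.AtPrime p) 1 (⟨r, hrp⟩ : p.primeCompl) * (r • y) = y
      rw [Algebra.smul_def, ← mul_assoc]
      have := IsLocalization.mk'_spec (Localization.AtPrime p) (1 : R) (⟨r, hrp⟩ : p.primeCompl)
      rw [this, map_one, one_mul]
    rw [Ext.smul_eq_comp_mk₀] at h1
    have := congr_arg (fun z => Ext.comp z (Ext.mk₀ g) (add_zero i)) h1
    simpa [Ext.comp_assoc_of_second_deg_zero, h2] using this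


include hπ in
lemma vdb_pd [Module.Finite R N] (h : ∀ (p : Ideal R) [p.IsMaximal], LinearMap.ker π ≤ p → VdbLoc (LinearMap.ker π) n p) :
    HasProjectiveDimensionLE N n := by
  rw [ModuleCat.hasProjectiveDimensionLE_iff_forall_maximalSpectrum]
  rintro ⟨p, hpm⟩
  change HasProjectiveDimensionLE (N.localizedModule p.primeCompl) n
  have eN : N.localizedModule p.primeCompl ≃ₗ[R] Localization.AtPrime p ⊗[R] N :=
    IsLocalizedModule.linearEquiv p.primeCompl (N.localizedModuleMkLinearMap p.primeCompl) (TensorProduct.mk R (Localization.AtPrime p) N 1)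
  by_cases hp : LinearMap.ker π ≤ p
  · obtain ⟨rs, rfl, hI, hreg, hmap⟩ := h p hp
    obtain ⟨e1⟩ := vdb_tensorN N π hπ (Localization.AtPrime p) (Ideal.ofList rs) (vdb_smul_top_eq hmap)
    let rs' := rs.map (algebraMap R (Localization.AtPrime p))
    have hreg' : IsWeaklyRegular (Localization.AtPrime p) rs' := by
      rw [isWeaklyRegular_map_algebraMap_iff]
      exact hreg
    have hm : (Ideal.ofList rs • ⊤ : Submodule R (Localization.AtPrime p)) = 
        (Ideal.ofList rs' • ⊤ : Submodule (Localization.AtPrime p) (Localization.AtPrime p)).restrictScalars R := by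
      rw [Ideal.smul_top_eq_map, Ideal.map_ofList, smul_eq_mul, Ideal.mul_top]
    let e2 : N.localizedModule p.primeCompl ≃ₗ[R] Localization.AtPrime p ⧸ (Ideal.ofList rs' • ⊤ : Submodule (Localization.AtPrime p) (Localization.AtPrime p)) :=
      eN.trans (e1.trans ((Submodule.quotEquivOfEq _ _ hm).trans (Submodule.Quotient.restrictScalarsEquiv R _)))
    have e3 : N.localizedModule p.primeCompl ≃ₗ[Localization.AtPrime p] Localization.AtPrime p ⧸ (Ideal.ofList rs' • ⊤ : Submodule (Localization.AtPrime p) (Localization.AtPrime p)) :=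
      LinearEquiv.extendScalarsOfIsLocalization p.primeCompl (Localization.AtPrime p) e2
    have hpd := ModuleCat.projectiveDimension_quotient_eq_add_length_of_isWeaklyRegular (ModuleCat.of (Localization.AtPrime p) (Localization.AtPrime p)) rs' hreg'
      (by
        intro r hr
        obtain ⟨s, hs, rfl⟩ := List.mem_map.1 hr
        rw [← Localization.AtPrime.map_eq_maximalIdeal]
        exact Ideal.mem_map_of_mem _ (hp (hI s hs)))
    have h0 : projectiveDimension (ModuleCat.of (Localization.AtPrime p) (Localization.AtPrime p)) = 0 :=
      ModuleCat.projectiveDimension_eq_zero_of_projective _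
    rw [h0, zero_add, List.length_map] at hpd
    have := (projectiveDimension_le_iff _ _).1 hpd.le
    exact hasProjectiveDimensionLT_of_iso e3.symm.toModuleIso (rs.length + 1)
  · obtain ⟨r, hr, hrp⟩ := SetLike.not_le_iff_exists.1 hp
    have : Subsingleton (N.localizedModule p.primeCompl) := by
      refine subsingleton_of_forall_eq 0 fun x => ?_
      obtain ⟨⟨y, t⟩, ht⟩ := IsLocalizedModule.surj p.primeCompl (N.localizedModuleMkLinearMap p.primeCompl) x
      have ht : t • x = N.localizedModuleMkLinearMap p.primeCompl y := ht
      apply IsLocalizedModule.smul_injective (N.localizedModuleMkLinearMap p.primeCompl) t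
      apply IsLocalizedModule.smul_injective (N.localizedModuleMkLinearMap p.primeCompl) (⟨r, hrp⟩ : p.primeCompl)
      change (⟨r, hrp⟩ : p.primeCompl) • t • x = r • t • 0
      rw [ht]
      change r • N.localizedModuleMkLinearMap p.primeCompl y = _
      rw [← map_smul, Module.mem_annihilator.1 (vdb_ker_ann N π hπ hr) y, map_zero, smul_zero, smul_zero]
    have := (ModuleCat.isZero_of_subsingleton (N.localizedModule p.primeCompl)).hasProjectiveDimensionLT_zero
    exact hasProjectiveDimensionLT_of_ge _ 0 (n + 1) (by omega)

end LocR


section Cond2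
open Abelian TensorProduct

lemma vdb_flatM (A B : Type u) [CommRing A] [CommRing B] [Algebra A B] [IsNoetherianRing (B ⊗[A] B)] 
    (n : ℕ) (h : ∀ (p : Ideal (B ⊗[A] B)) [p.IsMaximal], LinearMap.ker (vdbSurj A B) ≤ p → VdbLoc (LinearMap.ker (vdbSurj A B)) n p) :
    Module.Flat B (vdbM (algebraMap B (B ⊗[A] B)) (vdbN A B) n) := by
  let μ : (B ⊗[A] B) →+* B := (Algebra.TensorProduct.lmul' A (S := B)).toRingHom
  have hμ : ∀ b, μ (algebraMap B (B ⊗[A] B) b) = b := fun b => by simp [μ]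
  let m1 : Module B (Abelian.Ext.{u} (vdbN A B) (ModuleCat.of (B ⊗[A] B) (B ⊗[A] B)) n) := 
    (vdbM (algebraMap B (B ⊗[A] B)) (vdbN A B) n).isModule
  let m2 : Module B (vdbN A B) := inferInstanceAs (Module B B)
  have t1 : IsScalarTower B (B ⊗[A] B) (Abelian.Ext.{u} (vdbN A B) (ModuleCat.of (B ⊗[A] B) (B ⊗[A] B)) n) := 
    IsScalarTower.of_algebraMap_smul (fun b x => rfl)
  have t2 : IsScalarTower B (B ⊗[A] B) (vdbN A B) := 
    IsScalarTower.of_algebraMap_smul (fun b x => by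
      change μ (algebraMap B (B ⊗[A] B) b) * (show B from x) = b * (show B from x)
      rw [hμ])
  have f2 : Module.Flat B (vdbN A B) := inferInstanceAs (Module.Flat B B)
  have := vdb_flat (L := Abelian.Ext.{u} (vdbN A B) (ModuleCat.of (B ⊗[A] B) (B ⊗[A] B)) n) (N := vdbN A B) μ hμ
    (vdb_ker_smul (algebraMap B (B ⊗[A] B)) μ hμ (vdbN A B) (AddMonoidHom.id B) (fun r n => rfl) Function.bijective_id n _) 
    (fun r x => rfl) (by
      intro q hq
      have hmax : (q.comap μ).IsMaximal := Ideal.comap_isMaximal_of_surjective μ (fun b => ⟨_, hμ b⟩)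
      exact vdb_locL (vdbN A B) (vdbSurj A B) (vdbSurj_surj A B) n (q.comap μ) (h (q.comap μ) (fun r hr => by
        have : μ r = 0 := hr
        rw [Ideal.mem_comap, this]
        exact q.zero_mem)))
  exact this


lemma vdb_homNN (A B : Type u) [CommRing A] [CommRing B] [Algebra A B] :
    Nonempty ((vdbV (algebraMap B (B ⊗[A] B))).obj ((extFun (vdbN A B) 0).obj (vdbN A B)) ≃ₗ[B] B) := by
  have hann : ∀ r ∈ LinearMap.ker (vdbSurj A B), ∀ q : vdbN A B, r • q = 0 := fun r hr => 
    Module.mem_annihilator.1 (vdb_ker_ann _ (vdbSurj A B) (vdbSurj_surj A B) hr)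
  obtain ⟨e1⟩ := vdb_hom_cyclic (Q := vdbN A B) (vdbSurj A B) (vdbSurj_surj A B) hann
  let e2 : Abelian.Ext.{u} (vdbN A B) (vdbN A B) 0 ≃ₗ[B ⊗[A] B] (vdbN A B ⟶ vdbN A B) := Ext.linearEquiv₀
  let e3 : (vdbN A B ⟶ vdbN A B) ≃ₗ[B ⊗[A] B] (vdbN A B →ₗ[B ⊗[A] B] vdbN A B) := ModuleCat.homLinearEquiv (S := B ⊗[A] B)
  let e := e2.trans (e3.trans e1)
  let f : (vdbV (algebraMap B (B ⊗[A] B))).obj ((extFun (vdbN A B) 0).obj (vdbN A B)) ≃+ B := e.toAddEquiv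
  refine ⟨{ f with map_smul' := fun b x => ?_ }⟩
  have h1 : e (algebraMap B (B ⊗[A] B) b • x) = algebraMap B (B ⊗[A] B) b • e x := e.map_smul _ _
  refine h1.trans ?_
  change Algebra.TensorProduct.lmul' A (S := B) (algebraMap B (B ⊗[A] B) b) * (show B from e x) = b * (show B from e x)
  simp

lemma vdb_cond2 (A B : Type u) [CommRing A] [CommRing B] [Algebra A B] [IsNoetherianRing (B ⊗[A] B)] 
    (n : ℕ) (h : ∀ (p : Ideal (B ⊗[A] B)) [p.IsMaximal], LinearMap.ker (vdbSurj A B) ≤ p → VdbLoc (LinearMap.ker (vdbSurj A B)) n p) :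
    ∃ (M : Type u) (_ : AddCommGroup M) (_ : Module B M) (n : ℕ),
      Module.IsInvertible B M ∧
      ∀ i : ℤ, Nonempty
        (extEnvelopingFunctor A B i ≅
          torEnvelopingFunctor A B ((n : ℤ) - i) ⋙ tensorLeft (ModuleCat.of B M)) := by
  have key := vdb_cond A B n (vdb_pd (vdbN A B) (vdbSurj A B) (vdbSurj_surj A B) n h) 
    (vdb_extvan (vdbN A B) (vdbSurj A B) (vdbSurj_surj A B) n h) (vdb_flatM A B n h)
  refine ⟨vdbM (algebraMap B (B ⊗[A] B)) (vdbN A B) n, inferInstance, inferInstance, n, ?_, key⟩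
  obtain ⟨e⟩ := key (0 : ℕ)
  obtain ⟨e0⟩ := vdb_homNN A B
  let e1 := (eqToIso (vdb_ext_pos A B 0)).app (vdbN A B)
  let e2 := (Functor.isoWhiskerRight (vdbExtIso (vdbN A B) 0) (vdbV (algebraMap B (B ⊗[A] B)))).app (vdbN A B)
  let e3 := ((e.app (vdbN A B)).symm ≪≫ e1 ≪≫ e2).toLinearEquiv
  exact ⟨(torEnvelopingFunctor A B ((n : ℤ) - (0 : ℕ))).obj (vdbN A B), inferInstance, inferInstance, ⟨e3.trans e0⟩⟩

end Cond2


open RingTheory.Sequence in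
lemma vdb_X_regular {B κ : Type u} [CommRing B] (l : List κ) (hl : l.Nodup) :
    IsWeaklyRegular (MvPolynomial κ B) (l.map (MvPolynomial.X (R := B))) := by
  classical
  refine ⟨fun i hi => ?_⟩
  have hi' : i < l.length := by simpa using hi
  rw [isSMulRegular_quotient_iff_mem_of_smul_mem]
  intro g hg
  have key : (Ideal.ofList ((l.map (MvPolynomial.X (R := B))).take i) • (⊤ : Submodule (MvPolynomial κ B) (MvPolynomial κ B)))
      = Ideal.span (MvPolynomial.X '' {x | x ∈ l.take i}) := by
    rw [smul_eq_mul, Ideal.mul_top, Ideal.ofList, ← List.map_take]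
    congr 1
    ext x
    simp only [Set.mem_setOf_eq, List.mem_map, Set.mem_image]
  rw [key] at hg ⊢
  rw [MvPolynomial.mem_ideal_span_X_image] at hg ⊢
  intro m hm
  have hx : (l.map (MvPolynomial.X (R := B)))[i] = MvPolynomial.X l[i] := by simp
  rw [hx, smul_eq_mul] at hg
  obtain ⟨j, hj, hne⟩ := hg (Finsupp.single l[i] 1 + m) (by
    rw [MvPolynomial.mem_support_iff] at hm ⊢
    rwa [MvPolynomial.coeff_X_mul])
  refine ⟨j, hj, ?_⟩
  have hji : l[i] ≠ j := by
    rintro rfl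
    obtain ⟨k, hk, hk'⟩ := List.mem_iff_getElem.1 hj
    simp only [List.length_take, lt_inf_iff] at hk
    rw [List.getElem_take, hl.getElem_inj_iff] at hk'
    omega
  simpa [Finsupp.single_eq_of_ne hji.symm, Finsupp.single_eq_of_ne hji] using hne

open TensorProduct KaehlerDifferential in
lemma vdb_coord_etale {A C κ : Type u} [CommRing A] [CommRing C] [Algebra A C]
    [Algebra.FormallySmooth A C] [Algebra (MvPolynomial κ A) C]
    [IsScalarTower A (MvPolynomial κ A) C]
    (f : κ → C) (hf : ∀ i, algebraMap (MvPolynomial κ A) C (MvPolynomial.X i) = f i)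
    (b : Module.Basis κ C (Ω[C⁄A])) (hb : ∀ i, b i = D A C (f i)) :
    Algebra.FormallyEtale (MvPolynomial κ A) C := by
  let b' : Module.Basis κ C (C ⊗[MvPolynomial κ A] Ω[MvPolynomial κ A⁄A]) :=
    (mvPolynomialBasis A κ).baseChange C
  have hbij : Function.Bijective (mapBaseChange A (MvPolynomial κ A) C) := by
    have : mapBaseChange A (MvPolynomial κ A) C = (b'.equiv b (Equiv.refl κ)).toLinearMap := by
      refine b'.ext fun i => ?_
      rw [LinearEquiv.coe_coe, Module.Basis.equiv_apply]
      simp [b', hf, hb]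
    rw [this]
    exact (b'.equiv b (Equiv.refl κ)).bijective
  have h1 : Subsingleton (Algebra.H1Cotangent (MvPolynomial κ A) C) := by
    refine ⟨fun x y => ?_⟩
    have hz : ∀ x : Algebra.H1Cotangent (MvPolynomial κ A) C, x = 0 := fun x => by
      have h0 : Algebra.H1Cotangent.δ A (MvPolynomial κ A) C x = 0 :=
        hbij.1 (by
          rw [map_zero]
          exact (Algebra.H1Cotangent.exact_δ_mapBaseChange A (MvPolynomial κ A) C _).2 ⟨x, rfl⟩)
      obtain ⟨y, rfl⟩ := (Algebra.H1Cotangent.exact_map_δ A (MvPolynomial κ A) C _).1 h0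
      rw [Subsingleton.elim y 0, map_zero]
    rw [hz x, hz y]
  have h2 : Subsingleton (Ω[C⁄MvPolynomial κ A]) := by
    refine ⟨fun x y => ?_⟩
    have hz : ∀ x : Ω[C⁄MvPolynomial κ A], x = 0 := fun x => by
      obtain ⟨y, rfl⟩ := KaehlerDifferential.map_surjective A (MvPolynomial κ A) C x
      exact (KaehlerDifferential.exact_mapBaseChange_map A (MvPolynomial κ A) C y).2 (hbij.2 y)
    rw [hz x, hz y]
  exact ⟨h2, h1⟩

lemma vdb_flat_ess (P C : Type u) [CommRing P] [CommRing C] [Algebra P C] [IsNoetherianRing P]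
    [Algebra.EssFiniteType P C] [Algebra.FormallySmooth P C] : Module.Flat P C := by
  let S₀ := Algebra.EssFiniteType.subalgebra P C
  obtain ⟨k, g, hg⟩ := (Algebra.FiniteType.iff_quotient_mvPolynomial'' (R := P) (S := S₀)).mp inferInstance
  let M := (Algebra.EssFiniteType.submonoid P C).comap g.toRingHom
  have hu : ∀ y : M, IsUnit ((S₀.val.comp g) y) := fun y => y.2
  let F : Localization M →ₐ[P] C := IsLocalization.liftAlgHom (M := M) (f := S₀.val.comp g) hu
  have hF : Function.Surjective F := by
    intro c
    obtain ⟨⟨x, s⟩, hxs⟩ := IsLocalization.surj (Algebra.EssFiniteType.submonoid P C) c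
    obtain ⟨x', rfl⟩ := hg x
    obtain ⟨s', hs'⟩ := hg s
    have hsM : s' ∈ M := by
      change g s' ∈ Algebra.EssFiniteType.submonoid P C
      rw [hs']; exact s.2
    refine ⟨IsLocalization.mk' _ x' (⟨s', hsM⟩ : M), ?_⟩
    have : F (IsLocalization.mk' _ x' (⟨s', hsM⟩ : M)) = IsLocalization.lift (M := M) (g := (S₀.val.comp g).toRingHom) hu (IsLocalization.mk' _ x' (⟨s', hsM⟩ : M)) := rfl
    rw [this, IsLocalization.lift_mk'_spec]
    change ((g x' : S₀) : C) = ((g s' : S₀) : C) * c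
    rw [hs', mul_comm]
    exact hxs.symm
  have : Module.Flat P (Localization M) := .trans _ (MvPolynomial (Fin k) P) _
  have : IsNoetherianRing (Localization M) := IsLocalization.isNoetherianRing M _ inferInstance
  exact Algebra.FormallySmooth.flat_of_algHom_of_isNoetherianRing F hF


section G3
open KaehlerDifferential

/-- The derivation `r ↦ r - μ r` into the conormal module of an augmentation. -/
noncomputable def vdbDer {B R : Type u} [CommRing B] [CommRing R] [Algebra B R] (μ : R →ₐ[B] B)
    (I : Ideal R) (hI : ∀ r, r ∈ I ↔ μ r = 0) : Derivation B R I.Cotangent :=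
  let m : ∀ r : R, r - algebraMap B R (μ r) ∈ I := fun r => (hI _).2 (by simp)
  Derivation.mk'
    { toFun := fun r => I.toCotangent ⟨r - algebraMap B R (μ r), m r⟩
      map_add' := fun x y => by
        rw [← map_add]
        congr 1
        ext
        simp only [map_add, Submodule.coe_add]
        ring
      map_smul' := fun b x => by
        rw [RingHom.id_apply, ← algebraMap_smul R b (I.toCotangent _), ← map_smul]
        congr 1
        ext
        simp only [Algebra.smul_def, map_mul, AlgHom.commutes, SetLike.val_smul, smul_eq_mul]
        simp only [Algebra.algebraMap_self, RingHom.id_apply]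
        ring }
    (fun a b => by
      change I.toCotangent ⟨a * b - algebraMap B R (μ (a * b)), m _⟩ = 
        a • I.toCotangent ⟨b - algebraMap B R (μ b), m b⟩ + b • I.toCotangent ⟨a - algebraMap B R (μ a), m a⟩
      rw [← map_smul, ← map_smul, ← map_add, Ideal.toCotangent_eq]
      have := Ideal.mul_mem_mul (m a) (m b)
      rw [← pow_two] at this
      have h2 := neg_mem this
      convert h2 using 1
      simp only [map_mul, Submodule.coe_add, SetLike.val_smul, smul_eq_mul]
      ring)

lemma vdbDer_apply {B R : Type u} [CommRing B] [CommRing R] [Algebra B R] (μ : R →ₐ[B] B)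
    (I : Ideal R) (hI : ∀ r, r ∈ I ↔ μ r = 0) (y : I) : vdbDer μ I hI (y : R) = I.toCotangent y := by
  change I.toCotangent ⟨(y : R) - algebraMap B R (μ (y : R)), _⟩ = _
  congr 1
  ext
  simp [(hI _).1 y.2]

lemma vdb_span_loc {R C M N : Type u} [CommRing R] [CommRing C] [Algebra R C] (S : Submonoid R)
    [IsLocalization S C] [AddCommGroup M] [Module R M] [AddCommGroup N] [Module R N] [Module C N]
    [IsScalarTower R C N] (g : M →ₗ[R] N) [IsLocalizedModule S g] (s : Set M)
    (hs : Submodule.span C (g '' s) = ⊤) (m : M) : ∃ t ∈ S, t • m ∈ Submodule.span R s := by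
  have h : g m ∈ Submodule.localized' C S g (Submodule.span R s) := by
    rw [Submodule.localized'_span, hs]; trivial
  obtain ⟨m', hm', t, ht⟩ := h
  have ht : g m' = g ((t : R) • m) := by
    rw [map_smul]
    exact IsLocalizedModule.mk'_eq_iff.1 ht
  rw [IsLocalizedModule.eq_iff_exists S] at ht
  obtain ⟨c, hc⟩ := ht
  refine ⟨c * t, (c * t).2, ?_⟩
  have : ((c : R) * (t : R)) • m = (c : R) • m' := by
    rw [mul_smul]; exact hc.symm
  rw [this]
  exact Submodule.smul_mem _ _ hm'

lemma vdb_gen {B R : Type u} [CommRing B] [CommRing R] [Algebra B R] [IsNoetherianRing R] (μ : R →ₐ[B] B)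
    (I : Ideal R) (hI : ∀ r, r ∈ I ↔ μ r = 0) (p : Ideal R) [p.IsPrime] (hp : I ≤ p)
    (s : Set R) (hs : s ⊆ I) 
    (hsp : Submodule.span (Localization.AtPrime p) 
      ((KaehlerDifferential.map B B R (Localization.AtPrime p)) '' (D B R '' s)) = ⊤) :
    (Ideal.span s).map (algebraMap R (Localization.AtPrime p)) = I.map (algebraMap R (Localization.AtPrime p)) := by
  refine le_antisymm (Ideal.map_mono (Ideal.span_le.2 hs)) ?_
  have hfg : (I.map (algebraMap R (Localization.AtPrime p))).FG := 
    Ideal.FG.map (IsNoetherian.noetherian I) _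
  refine Submodule.le_of_le_smul_of_le_jacobson_bot (I := I.map (algebraMap R (Localization.AtPrime p))) hfg ?_ ?_
  · rw [IsLocalRing.jacobson_eq_maximalIdeal _ bot_ne_top, ← Localization.AtPrime.map_eq_maximalIdeal]
    exact Ideal.map_mono hp
  · rw [Ideal.map_le_iff_le_comap]
    intro y hy
    obtain ⟨t, ht, hty⟩ := vdb_span_loc (C := Localization.AtPrime p) p.primeCompl 
      (KaehlerDifferential.map B B R (Localization.AtPrime p)) (D B R '' s) hsp (D B R y)
    have h1 : Submodule.span R (D B R '' s) ≤ Submodule.comap (vdbDer μ I hI).liftKaehlerDifferential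
        (Submodule.map I.toCotangent (Submodule.comap (Submodule.subtype I) (Ideal.span s))) := by
      rw [Submodule.span_le]
      rintro _ ⟨x, hx, rfl⟩
      refine ⟨⟨x, hs hx⟩, Ideal.subset_span hx, ?_⟩
      rw [Derivation.liftKaehlerDifferential_comp_D]
      exact (vdbDer_apply μ I hI ⟨x, hs hx⟩).symm
    obtain ⟨z, hz, hzt⟩ := h1 hty
    rw [map_smul, Derivation.liftKaehlerDifferential_comp_D, vdbDer_apply μ I hI ⟨y, hy⟩, ← map_smul,
      Ideal.toCotangent_eq] at hzt
    have hz : (z : R) ∈ Ideal.span s := hz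
    have hzt : (z : R) - t * y ∈ I ^ 2 := hzt
    have hu : IsUnit (algebraMap R (Localization.AtPrime p) t) := 
      IsLocalization.map_units _ (⟨t, ht⟩ : p.primeCompl)
    rw [Ideal.mem_comap, ← Ideal.unit_mul_mem_iff_mem _ hu, ← map_mul]
    have : t * y = z - (z - t * y) := by ring
    rw [this, map_sub]
    refine Ideal.sub_mem _ (Ideal.mem_sup_left (Ideal.mem_map_of_mem _ hz)) (Ideal.mem_sup_right ?_)
    rw [smul_eq_mul, ← Ideal.map_mul, ← pow_two]
    exact Ideal.mem_map_of_mem _ hzt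

lemma vdb_span_I {B R C : Type u} [CommRing B] [CommRing R] [Algebra B R] (μ : R →ₐ[B] B)
    (I : Ideal R) (hI : ∀ r, r ∈ I ↔ μ r = 0) [CommRing C] [Algebra R C] [Algebra B C] [IsScalarTower B R C]
    (S : Submonoid R) [IsLocalization S C] :
    Submodule.span C (Set.range (fun y : I => D B C (algebraMap R C y))) = ⊤ := by
  rw [← KaehlerDifferential.span_range_map_derivation_of_isLocalization B R C S]
  congr 1
  ext x
  constructor
  · rintro ⟨y, rfl⟩
    exact ⟨y, by simp⟩
  · rintro ⟨r, rfl⟩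
    refine ⟨⟨r - algebraMap B R (μ r), (hI _).2 (by simp)⟩, ?_⟩
    simp [← IsScalarTower.algebraMap_apply B R C]

lemma vdb_loc_main {B R : Type u} [CommRing B] [CommRing R] [Algebra B R] [IsNoetherianRing B] 
    [IsNoetherianRing R] [Algebra.EssFiniteType B R] [Algebra.FormallySmooth B R] (μ : R →ₐ[B] B)
    (I : Ideal R) (hI : ∀ r, r ∈ I ↔ μ r = 0) (p : Ideal R) [p.IsPrime] (hp : I ≤ p) :
    VdbLoc I (Module.finrank (Localization.AtPrime p) (Ω[Localization.AtPrime p⁄B])) p := by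
  have e1 : Algebra.FormallySmooth R (Localization.AtPrime p) := 
    Algebra.FormallySmooth.of_isLocalization p.primeCompl
  have e2 : Algebra.FormallySmooth B (Localization.AtPrime p) := 
    Algebra.FormallySmooth.comp B R _
  have e3 : Algebra.EssFiniteType B (Localization.AtPrime p) := inferInstance
  have e4 : Module.FinitePresentation (Localization.AtPrime p) (Ω[Localization.AtPrime p⁄B]) :=
    Module.finitePresentation_of_finite _ _
  obtain ⟨κ, a, b, hb⟩ := Module.exists_basis_of_span_of_flat 
    (fun y : I => D B (Localization.AtPrime p) (algebraMap R (Localization.AtPrime p) y)) 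
    (vdb_span_I μ I hI p.primeCompl)
  have : Finite κ := Module.Finite.finite_basis b
  have := Fintype.ofFinite κ
  let g : κ → R := fun i => a i
  let f : κ → Localization.AtPrime p := fun i => algebraMap R _ (g i)
  algebraize [(MvPolynomial.aeval (R := B) f).toRingHom]
  have hX : ∀ i, algebraMap (MvPolynomial κ B) (Localization.AtPrime p) (MvPolynomial.X i) = f i := 
    fun i => MvPolynomial.aeval_X f i
  have : IsScalarTower B (MvPolynomial κ B) (Localization.AtPrime p) := 
    IsScalarTower.of_algebraMap_eq' (MvPolynomial.aeval (R := B) f).comp_algebraMap.symm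
  have e5 := vdb_coord_etale f hX b hb
  have e6 : Algebra.EssFiniteType (MvPolynomial κ B) (Localization.AtPrime p) := 
    Algebra.EssFiniteType.of_comp B _ _
  have e7 := vdb_flat_ess (MvPolynomial κ B) (Localization.AtPrime p)
  have reg := (vdb_X_regular (B := B) (Finset.univ : Finset κ).toList (Finset.nodup_toList _)).of_flat 
    (S := Localization.AtPrime p)
  refine ⟨(Finset.univ : Finset κ).toList.map g, ?_, ?_, ?_, ?_⟩
  · rw [Module.finrank_eq_card_basis b]
    simp
  · intro r hr
    obtain ⟨i, -, rfl⟩ := List.mem_map.1 hr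
    exact (a i).2
  · rw [← RingTheory.Sequence.isWeaklyRegular_map_algebraMap_iff (Localization.AtPrime p)]
    have hl : ((Finset.univ : Finset κ).toList.map g).map (algebraMap R (Localization.AtPrime p)) =
        ((Finset.univ : Finset κ).toList.map (MvPolynomial.X (R := B))).map
          (algebraMap (MvPolynomial κ B) (Localization.AtPrime p)) := by
      rw [List.map_map, List.map_map]
      exact List.map_congr_left fun i _ => (hX i).symm
    rw [hl]
    exact reg
  · have hr : Ideal.ofList ((Finset.univ : Finset κ).toList.map g) = Ideal.span (Set.range g) := by
      rw [Ideal.ofList]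
      congr 1
      ext x
      simp
    rw [hr]
    refine vdb_gen μ I hI p hp _ ?_ ?_
    · rintro _ ⟨i, rfl⟩
      exact (a i).2
    · rw [← b.span_eq, ← Set.range_comp, ← Set.range_comp]
      congr 2
      ext i
      simp [hb, g]

lemma vdb_exists_n {B R : Type u} [CommRing B] [CommRing R] [Algebra B R] [IsNoetherianRing B] 
    [ConnectedSpace (PrimeSpectrum B)]
    [IsNoetherianRing R] [Algebra.EssFiniteType B R] [Algebra.FormallySmooth B R] (μ : R →ₐ[B] B)
    (I : Ideal R) (hI : ∀ r, r ∈ I ↔ μ r = 0) : ∃ n : ℕ, ∀ (p : Ideal R) [p.IsPrime], I ≤ p → 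
      VdbLoc I n p := by
  have e4 : Module.FinitePresentation R (Ω[R⁄B]) := Module.finitePresentation_of_finite _ _
  have hlc : IsLocallyConstant (fun q : PrimeSpectrum B => 
      Module.rankAtStalk (R := R) (Ω[R⁄B]) (q.comap μ.toRingHom)) := 
    (Module.isLocallyConstant_rankAtStalk (R := R) (M := Ω[R⁄B])).comp_continuous 
      (PrimeSpectrum.continuous_comap μ.toRingHom)
  obtain ⟨n, hn⟩ := hlc.exists_eq_const
  refine ⟨n, fun p _ hp => ?_⟩
  have hq : PrimeSpectrum.comap μ.toRingHom (PrimeSpectrum.comap (algebraMap B R) ⟨p, inferInstance⟩) = ⟨p, inferInstance⟩ := by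
    ext x
    change algebraMap B R (μ x) ∈ p ↔ x ∈ p
    have : x - algebraMap B R (μ x) ∈ p := hp ((hI _).2 (by simp))
    exact ⟨fun h => by simpa using p.add_mem this h, fun h => by simpa using p.sub_mem h this⟩
  have h1 := congrFun hn (PrimeSpectrum.comap (algebraMap B R) ⟨p, inferInstance⟩)
  simp only [hq, Function.const_apply] at h1
  rw [← h1]
  have h2 := vdb_loc_main μ I hI p hp
  convert h2 using 1
  rw [Module.rankAtStalk]
  exact LinearEquiv.finrank_eq (IsLocalizedModule.linearEquiv p.primeCompl 
    (LocalizedModule.mkLinearMap p.primeCompl (Ω[R⁄B])) (KaehlerDifferential.map B B R (Localization.AtPrime p)) |>.extendScalarsOfIsLocalization p.primeCompl (Localization.AtPrime p))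

end G3



open TensorProduct in
/-- **Van den Bergh duality between Hochschild cohomology and homology for smooth maps.**
Let `A` be a commutative noetherian ring and `B` a nonzero, flat, formally smooth
`A`-algebra, essentially of finite type over `A`, with connected spectrum.  Then there are
an invertible `B`-module `M̄` and an `n : ℕ` such that for every `B ⊗[A] B`-module `X` and
every integer `i` there is an isomorphism of `B`-modules
`Ext^i_{B ⊗[A] B}(B, X) ≅ M̄ ⊗[B] Tor^{B ⊗[A] B}_{n-i}(B, X)`, natural in `X` (with `Ext`
and `Tor` in negative degrees interpreted as zero). -/
theorem vdb_duality_hochschild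
    {A B : Type u} [CommRing A] [CommRing B] [Algebra A B]
    [IsNoetherianRing A] [Nontrivial B]
    [Algebra.EssFiniteType A B] [Algebra.FormallySmooth A B]
    (hflat : Module.Flat A B)
    (hconn : ConnectedSpace (PrimeSpectrum B)) :
    ∃ (M : Type u) (_ : AddCommGroup M) (_ : Module B M) (n : ℕ),
      Module.IsInvertible B M ∧
      ∀ i : ℤ, Nonempty
        (extEnvelopingFunctor A B i ≅
          torEnvelopingFunctor A B ((n : ℤ) - i) ⋙ tensorLeft (ModuleCat.of B M)) := by
  have hB : IsNoetherianRing B := Algebra.EssFiniteType.isNoetherianRing A B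
  have hR : IsNoetherianRing (B ⊗[A] B) := Algebra.EssFiniteType.isNoetherianRing B (B ⊗[A] B)
  let μ : (B ⊗[A] B) →ₐ[B] B := 
    { (Algebra.TensorProduct.lmul' A (S := B)).toRingHom with commutes' := fun b => by simp }
  obtain ⟨n, hn⟩ := vdb_exists_n μ (LinearMap.ker (vdbSurj A B)) (fun r => Iff.rfl)
  exact vdb_cond2 A B n (fun p _ hp => hn p hp)
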